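/- arXiv:1605.05115 — 13 statements merged into one kernel-verified Lean document; each statement's English description precedes it below -/
import Mathlib

section
/- Let s_{ij} and s̃_{ij} (1 ≤ i,j ≤ 3) be real numbers such that the second and third rows coincide (s_{2j} = s̃_{2j} and s_{3j} = s̃_{3j} for j = 1,2,3) and such that s_{11}·s̃_{12} = s̃_{11}·s_{12} and s_{13}·s̃_{12} = s̃_{13}·s_{12}. Then s^{11} = s̃^{11}, s^{21}·s̃_{12} = s̃^{21}·s_{12}, s^{31}·s̃_{12} = s̃^{31}·s_{12}, and det S · s̃_{12} = det S̃ · s_{12}. Consequently, if s_{12}, s̃_{12}, s^{11}, s^{21}, s^{31}, s̃^{21}, s̃^{31} are all nonzero, then det S/(s_{12} s^{11}) = det S̃/(s̃_{12} s̃^{11}), det S/s^{21} = det S̃/s̃^{21}, and det S/s^{31} = det S̃/s̃^{31} (i.e. H₁²/s_{12} = H̃₁²/s̃_{12}, H₂² = H̃₂², H₃² = H̃₃²). -/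
/-- The signed first-column minors of a 3×3 matrix `S = (s_{ij})` (indices `0,1,2`):
`sminor S 0 = s^{11} = s₂₂s₃₃ − s₂₃s₃₂`, `sminor S 1 = s^{21} = s₁₃s₃₂ − s₁₂s₃₃`,
`sminor S 2 = s^{31} = s₁₂s₂₃ − s₁₃s₂₂`. -/
def sminor (S : Matrix (Fin 3) (Fin 3) ℝ) : Fin 3 → ℝ :=
  ![S 1 1 * S 2 2 - S 1 2 * S 2 1,
    S 0 2 * S 2 1 - S 0 1 * S 2 2,
    S 0 1 * S 1 2 - S 0 2 * S 1 1]

/-- **A Stäckel metric is determined by the second and third rows of `S` together with the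
quotients `s₁₁/s₁₂` and `s₁₃/s₁₂`.** If `S` and `T = S̃` have the same second and third rows,
`s₁₁·s̃₁₂ = s̃₁₁·s₁₂` and `s₁₃·s̃₁₂ = s̃₁₃·s₁₂`, then `s^{11} = s̃^{11}`,
`s^{21}·s̃₁₂ = s̃^{21}·s₁₂`, `s^{31}·s̃₁₂ = s̃^{31}·s₁₂` and `det S·s̃₁₂ = det S̃·s₁₂`;
consequently, when the displayed quantities are nonzero, `H₁²/s₁₂ = H̃₁²/s̃₁₂`,
`H₂² = H̃₂²` and `H₃² = H̃₃²`. -/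
theorem stmt2 (S T : Matrix (Fin 3) (Fin 3) ℝ)
    (hrow2 : ∀ j : Fin 3, S 1 j = T 1 j)
    (hrow3 : ∀ j : Fin 3, S 2 j = T 2 j)
    (h11 : S 0 0 * T 0 1 = T 0 0 * S 0 1)
    (h13 : S 0 2 * T 0 1 = T 0 2 * S 0 1) :
    (sminor S 0 = sminor T 0 ∧
     sminor S 1 * T 0 1 = sminor T 1 * S 0 1 ∧
     sminor S 2 * T 0 1 = sminor T 2 * S 0 1 ∧
     S.det * T 0 1 = T.det * S 0 1) ∧
    (S 0 1 ≠ 0 → T 0 1 ≠ 0 → sminor S 0 ≠ 0 → sminor S 1 ≠ 0 → sminor S 2 ≠ 0 →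
      sminor T 1 ≠ 0 → sminor T 2 ≠ 0 →
      S.det / (S 0 1 * sminor S 0) = T.det / (T 0 1 * sminor T 0) ∧
      S.det / sminor S 1 = T.det / sminor T 1 ∧
      S.det / sminor S 2 = T.det / sminor T 2) := by
  have key : sminor S 0 = sminor T 0 ∧
     sminor S 1 * T 0 1 = sminor T 1 * S 0 1 ∧
     sminor S 2 * T 0 1 = sminor T 2 * S 0 1 ∧
     S.det * T 0 1 = T.det * S 0 1 := by
    refine ⟨?_, ?_, ?_, ?_⟩
    · simp [sminor, hrow2, hrow3]
    · simp only [sminor, Matrix.cons_val, hrow2, hrow3]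
      linear_combination T 2 1 * h13
    · simp only [sminor, Matrix.cons_val, hrow2, hrow3]
      linear_combination (-T 1 1) * h13
    · simp only [Matrix.det_fin_three, hrow2, hrow3]
      linear_combination (T 1 1 * T 2 2 - T 1 2 * T 2 1) * h11 +
        (T 1 0 * T 2 1 - T 1 1 * T 2 0) * h13
  refine ⟨key, ?_⟩
  obtain ⟨k0, k1, k2, kd⟩ := key
  intro hs ht m0 m1 m2 n1 n2
  have cross : ∀ a b : ℝ, a * T 0 1 = b * S 0 1 → S.det * b = T.det * a := by
    intro a b hab
    apply mul_right_cancel₀ hs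
    linear_combination (-S.det) * hab + a * kd
  refine ⟨?_, ?_, ?_⟩
  · rw [← k0, div_eq_div_iff (mul_ne_zero hs m0) (mul_ne_zero ht m0)]
    linear_combination sminor S 0 * kd
  · rw [div_eq_div_iff m1 n1]
    exact cross _ _ k1
  · rw [div_eq_div_iff m2 n2]
    exact cross _ _ k2
end

section
/- Let I ⊆ ℝ be an open interval, let h, h̃ : I → (0,∞) be C² functions, let F, F̃ : I → ℝ be continuous and let c ∈ ℝ. Assume that for all x ∈ I: −c·F(x) + (1/16)·((log h)'(x))² + (1/4)·(log h)''(x) = −c·F̃(x) + (1/16)·((log h̃)'(x))² + (1/4)·(log h̃)''(x). Then the function u := (h/h̃)^{1/4} is C² on I and satisfies u''(x) + (1/2)·(log h̃)'(x)·u'(x) + c·(F̃(x) − F(x))·u(x) = 0 for all x ∈ I. -/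
/-- **Equality of transformed radial potentials yields an ODE for `u = (h/h̃)^{1/4}`.**
If `h, h̃` are positive `C²` functions on the open interval `I = (a,b)`, `F, F̃` are
continuous on `I` and
`−c·F + (1/16)((log h)')² + (1/4)(log h)'' = −c·F̃ + (1/16)((log h̃)')² + (1/4)(log h̃)''`
on `I`, then `u = (h/h̃)^{1/4}` is `C²` on `I` and satisfies
`u'' + (1/2)(log h̃)'·u' + c·(F̃ − F)·u = 0` on `I`. -/
theorem stmt3 (a b : ℝ) (h htil F Ftil : ℝ → ℝ) (c : ℝ)
    (hh : ContDiffOn ℝ 2 h (Set.Ioo a b)) (hht : ContDiffOn ℝ 2 htil (Set.Ioo a b))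
    (hpos : ∀ x ∈ Set.Ioo a b, 0 < h x) (hpost : ∀ x ∈ Set.Ioo a b, 0 < htil x)
    (hF : ContinuousOn F (Set.Ioo a b)) (hFt : ContinuousOn Ftil (Set.Ioo a b))
    (heq : ∀ x ∈ Set.Ioo a b,
      -c * F x + (1 / 16) * (deriv (fun y => Real.log (h y)) x) ^ 2
          + (1 / 4) * deriv (deriv (fun y => Real.log (h y))) x
        = -c * Ftil x + (1 / 16) * (deriv (fun y => Real.log (htil y)) x) ^ 2
          + (1 / 4) * deriv (deriv (fun y => Real.log (htil y))) x) :
    ContDiffOn ℝ 2 (fun x => (h x / htil x) ^ ((1 : ℝ) / 4)) (Set.Ioo a b) ∧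
    ∀ x ∈ Set.Ioo a b,
      deriv (deriv (fun y => (h y / htil y) ^ ((1 : ℝ) / 4))) x
          + (1 / 2) * deriv (fun y => Real.log (htil y)) x
              * deriv (fun y => (h y / htil y) ^ ((1 : ℝ) / 4)) x
          + c * (Ftil x - F x) * ((h x / htil x) ^ ((1 : ℝ) / 4)) = 0 := by
  have hL : ContDiffOn ℝ 2 (fun y => Real.log (h y)) (Set.Ioo a b) :=
    hh.log (fun x hx => (hpos x hx).ne')
  have hM : ContDiffOn ℝ 2 (fun y => Real.log (htil y)) (Set.Ioo a b) :=
    hht.log (fun x hx => (hpost x hx).ne')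
  have hu : ∀ x ∈ Set.Ioo a b, (h x / htil x) ^ ((1 : ℝ) / 4)
      = Real.exp ((Real.log (h x) - Real.log (htil x)) / 4) := by
    intro x hx
    rw [Real.rpow_def_of_pos (div_pos (hpos x hx) (hpost x hx)),
      Real.log_div (hpos x hx).ne' (hpost x hx).ne']
    congr 1
    ring
  have hd1 : ∀ f : ℝ → ℝ, ContDiffOn ℝ 2 f (Set.Ioo a b) → ∀ x ∈ Set.Ioo a b,
      HasDerivAt f (deriv f x) x := by
    intro f hf x hx
    exact ((hf.differentiableOn (by norm_num)).differentiableAt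
      (isOpen_Ioo.mem_nhds hx)).hasDerivAt
  have hd2 : ∀ f : ℝ → ℝ, ContDiffOn ℝ 2 f (Set.Ioo a b) → ∀ x ∈ Set.Ioo a b,
      HasDerivAt (deriv f) (deriv (deriv f) x) x := by
    intro f hf x hx
    have h1 : ContDiffOn ℝ 1 (deriv f) (Set.Ioo a b) :=
      hf.deriv_of_isOpen isOpen_Ioo (by norm_num)
    exact ((h1.differentiableOn (by norm_num)).differentiableAt
      (isOpen_Ioo.mem_nhds hx)).hasDerivAt
  refine ⟨((hL.sub hM).div_const 4).exp.congr hu, ?_⟩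
  intro x hx
  have e := heq x hx
  generalize hLd : (fun y => Real.log (h y)) = L at *
  generalize hMd : (fun y => Real.log (htil y)) = M at *
  generalize hUd : (fun y => (h y / htil y) ^ ((1 : ℝ) / 4)) = U at *
  have hU : ∀ y ∈ Set.Ioo a b, U y = Real.exp ((L y - M y) / 4) := by
    intro y hy
    rw [← hUd, ← hLd, ← hMd]
    exact hu y hy
  have hUx : (h x / htil x) ^ ((1 : ℝ) / 4) = U x := by rw [← hUd]
  have hU1 : ∀ y ∈ Set.Ioo a b, HasDerivAt U (U y * ((deriv L y - deriv M y) / 4)) y := by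
    intro y hy
    rw [hU y hy]
    refine (((hd1 L hL y hy).sub (hd1 M hM y hy)).div_const 4).exp.congr_of_eventuallyEq ?_
    filter_upwards [isOpen_Ioo.mem_nhds hy] with z hz
    exact hU z hz
  have hU2 := ((hU1 x hx).mul
    (((hd2 L hL x hx).sub (hd2 M hM x hx)).div_const 4)).congr_of_eventuallyEq
    (f₁ := deriv U) (by
      filter_upwards [isOpen_Ioo.mem_nhds hx] with z hz
      exact (hU1 z hz).deriv)
  rw [hUx, hU2.deriv, (hU1 x hx).deriv]
  simp only [Pi.sub_apply]
  linear_combination (U x) * e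
end

section
/- Let I₁, I₂, I₃ ⊆ ℝ be open intervals and Ω = I₁ × I₂ × I₃. Let s_{i1}, s_{i2}, s_{i3} : I_i → ℝ (i = 1,2,3) be smooth, viewed as functions of the variable xⁱ on Ω, let f_i : I_i → (0,∞) be smooth, and let λ ∈ ℝ. Assume s^{11} and det S are nowhere zero on Ω. Then a smooth function f : Ω → ℂ satisfies the equation Σ_{i=1}^{3} (s^{i1}/det S)·A_i⁰ f = (λ²+1)·f on Ω if and only if it satisfies A₁ f + s_{12}·L f + s_{13}·H f = 0 on Ω. -/
open scoped ContDiff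

/-- Partial derivative in the first variable of `ℝ × ℝ × ℝ`. -/
noncomputable def pd1 (f : ℝ × ℝ × ℝ → ℂ) (p : ℝ × ℝ × ℝ) : ℂ :=
  deriv (fun t => f (t, p.2.1, p.2.2)) p.1

/-- Partial derivative in the second variable of `ℝ × ℝ × ℝ`. -/
noncomputable def pd2 (f : ℝ × ℝ × ℝ → ℂ) (p : ℝ × ℝ × ℝ) : ℂ :=
  deriv (fun t => f (p.1, t, p.2.2)) p.2.1

/-- Partial derivative in the third variable of `ℝ × ℝ × ℝ`. -/
noncomputable def pd3 (f : ℝ × ℝ × ℝ → ℂ) (p : ℝ × ℝ × ℝ) : ℂ :=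
  deriv (fun t => f (p.1, p.2.1, t)) p.2.2

/-- The operator `A_i⁰ u = −∂ᵢ²u + (1/2)·(d/dxⁱ log f_i)·∂ᵢu`. -/
noncomputable def opA0 (pdi : (ℝ × ℝ × ℝ → ℂ) → ℝ × ℝ × ℝ → ℂ) (fi : ℝ → ℝ)
    (xi : ℝ × ℝ × ℝ → ℝ) (f : ℝ × ℝ × ℝ → ℂ) (p : ℝ × ℝ × ℝ) : ℂ :=
  - pdi (pdi f) p + (1 / 2 : ℂ) * (deriv (fun t => Real.log (fi t)) (xi p) : ℂ) * pdi f p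

/-- The operator `A_i u = A_i⁰ u − (λ²+1)·s_{i1}(xⁱ)·u`. -/
noncomputable def opA (pdi : (ℝ × ℝ × ℝ → ℂ) → ℝ × ℝ × ℝ → ℂ) (fi : ℝ → ℝ)
    (xi : ℝ × ℝ × ℝ → ℝ) (si1 : ℝ → ℝ) (lam : ℝ)
    (f : ℝ × ℝ × ℝ → ℂ) (p : ℝ × ℝ × ℝ) : ℂ :=
  opA0 pdi fi xi f p - (((lam ^ 2 + 1) * si1 (xi p) : ℝ) : ℂ) * f p

/-- The signed minor `s^{11} = s₂₂s₃₃ − s₂₃s₃₂`, as a function on `Ω`. -/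
def sm11 (s22 s23 s32 s33 : ℝ → ℝ) (p : ℝ × ℝ × ℝ) : ℝ :=
  s22 p.2.1 * s33 p.2.2 - s23 p.2.1 * s32 p.2.2

/-- The signed minor `s^{21} = s₁₃s₃₂ − s₁₂s₃₃`, as a function on `Ω`. -/
def sm21 (s12 s13 s32 s33 : ℝ → ℝ) (p : ℝ × ℝ × ℝ) : ℝ :=
  s13 p.1 * s32 p.2.2 - s12 p.1 * s33 p.2.2

/-- The signed minor `s^{31} = s₁₂s₂₃ − s₁₃s₂₂`, as a function on `Ω`. -/
def sm31 (s12 s13 s22 s23 : ℝ → ℝ) (p : ℝ × ℝ × ℝ) : ℝ :=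
  s12 p.1 * s23 p.2.1 - s13 p.1 * s22 p.2.1

/-- `det S = s₁₁s^{11} + s₂₁s^{21} + s₃₁s^{31}`, as a function on `Ω`. -/
def sdet (s11 s12 s13 s21 s22 s23 s31 s32 s33 : ℝ → ℝ) (p : ℝ × ℝ × ℝ) : ℝ :=
  s11 p.1 * sm11 s22 s23 s32 s33 p + s21 p.2.1 * sm21 s12 s13 s32 s33 p
    + s31 p.2.2 * sm31 s12 s13 s22 s23 p

/-- **Lemma 2.1 (separation identity for the shifted Helmholtz equation).**
On `Ω = I₁ × I₂ × I₃`, a smooth `f` satisfies `Σᵢ (s^{i1}/det S)·A_i⁰ f = (λ²+1)·f`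
if and only if it satisfies `A₁ f + s₁₂·L f + s₁₃·H f = 0`, where
`L = −(s₃₃/s^{11})A₂ + (s₂₃/s^{11})A₃` and `H = (s₃₂/s^{11})A₂ − (s₂₂/s^{11})A₃`. -/
theorem stmt5 (a₁ b₁ a₂ b₂ a₃ b₃ lam : ℝ)
    (s11 s12 s13 s21 s22 s23 s31 s32 s33 f1 f2 f3 : ℝ → ℝ)
    (hs1 : ContDiffOn ℝ ∞ s11 (Set.Ioo a₁ b₁) ∧ ContDiffOn ℝ ∞ s12 (Set.Ioo a₁ b₁) ∧
      ContDiffOn ℝ ∞ s13 (Set.Ioo a₁ b₁))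
    (hs2 : ContDiffOn ℝ ∞ s21 (Set.Ioo a₂ b₂) ∧ ContDiffOn ℝ ∞ s22 (Set.Ioo a₂ b₂) ∧
      ContDiffOn ℝ ∞ s23 (Set.Ioo a₂ b₂))
    (hs3 : ContDiffOn ℝ ∞ s31 (Set.Ioo a₃ b₃) ∧ ContDiffOn ℝ ∞ s32 (Set.Ioo a₃ b₃) ∧
      ContDiffOn ℝ ∞ s33 (Set.Ioo a₃ b₃))
    (hf1 : ContDiffOn ℝ ∞ f1 (Set.Ioo a₁ b₁) ∧ ∀ x ∈ Set.Ioo a₁ b₁, 0 < f1 x)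
    (hf2 : ContDiffOn ℝ ∞ f2 (Set.Ioo a₂ b₂) ∧ ∀ x ∈ Set.Ioo a₂ b₂, 0 < f2 x)
    (hf3 : ContDiffOn ℝ ∞ f3 (Set.Ioo a₃ b₃) ∧ ∀ x ∈ Set.Ioo a₃ b₃, 0 < f3 x)
    (hm11 : ∀ p ∈ (Set.Ioo a₁ b₁) ×ˢ (Set.Ioo a₂ b₂) ×ˢ (Set.Ioo a₃ b₃),
      sm11 s22 s23 s32 s33 p ≠ 0)
    (hdet : ∀ p ∈ (Set.Ioo a₁ b₁) ×ˢ (Set.Ioo a₂ b₂) ×ˢ (Set.Ioo a₃ b₃),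
      sdet s11 s12 s13 s21 s22 s23 s31 s32 s33 p ≠ 0)
    (f : ℝ × ℝ × ℝ → ℂ)
    (hfsm : ContDiffOn ℝ ∞ f ((Set.Ioo a₁ b₁) ×ˢ (Set.Ioo a₂ b₂) ×ˢ (Set.Ioo a₃ b₃))) :
    (∀ p ∈ (Set.Ioo a₁ b₁) ×ˢ (Set.Ioo a₂ b₂) ×ˢ (Set.Ioo a₃ b₃),
        ((sm11 s22 s23 s32 s33 p / sdet s11 s12 s13 s21 s22 s23 s31 s32 s33 p : ℝ) : ℂ)
            * opA0 pd1 f1 (fun q => q.1) f p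
          + ((sm21 s12 s13 s32 s33 p / sdet s11 s12 s13 s21 s22 s23 s31 s32 s33 p : ℝ) : ℂ)
            * opA0 pd2 f2 (fun q => q.2.1) f p
          + ((sm31 s12 s13 s22 s23 p / sdet s11 s12 s13 s21 s22 s23 s31 s32 s33 p : ℝ) : ℂ)
            * opA0 pd3 f3 (fun q => q.2.2) f p
          = ((lam ^ 2 + 1 : ℝ) : ℂ) * f p)
    ↔ (∀ p ∈ (Set.Ioo a₁ b₁) ×ˢ (Set.Ioo a₂ b₂) ×ˢ (Set.Ioo a₃ b₃),
        opA pd1 f1 (fun q => q.1) s11 lam f p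
          + (s12 p.1 : ℂ) *
              (-((s33 p.2.2 / sm11 s22 s23 s32 s33 p : ℝ) : ℂ)
                  * opA pd2 f2 (fun q => q.2.1) s21 lam f p
                + ((s23 p.2.1 / sm11 s22 s23 s32 s33 p : ℝ) : ℂ)
                  * opA pd3 f3 (fun q => q.2.2) s31 lam f p)
          + (s13 p.1 : ℂ) *
              (((s32 p.2.2 / sm11 s22 s23 s32 s33 p : ℝ) : ℂ)
                  * opA pd2 f2 (fun q => q.2.1) s21 lam f p
                - ((s22 p.2.1 / sm11 s22 s23 s32 s33 p : ℝ) : ℂ)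
                  * opA pd3 f3 (fun q => q.2.2) s31 lam f p)
          = 0) := by
  refine forall₂_congr fun p hp => ?_
  have hm := hm11 p hp
  have hd := hdet p hp
  have hD : sdet s11 s12 s13 s21 s22 s23 s31 s32 s33 p
      = s11 p.1 * sm11 s22 s23 s32 s33 p + s21 p.2.1 * sm21 s12 s13 s32 s33 p
        + s31 p.2.2 * sm31 s12 s13 s22 s23 p := rfl
  have h2 : sm21 s12 s13 s32 s33 p = s13 p.1 * s32 p.2.2 - s12 p.1 * s33 p.2.2 := rfl
  have h3 : sm31 s12 s13 s22 s23 p = s12 p.1 * s23 p.2.1 - s13 p.1 * s22 p.2.1 := rfl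
  rw [h2, h3] at hD
  rw [h2, h3]
  simp only [opA]
  generalize sm11 s22 s23 s32 s33 p = m at *
  generalize sdet s11 s12 s13 s21 s22 s23 s31 s32 s33 p = d at *
  generalize opA0 pd1 f1 (fun q => q.1) f p = A1
  generalize opA0 pd2 f2 (fun q => q.2.1) f p = A2
  generalize opA0 pd3 f3 (fun q => q.2.2) f p = A3
  have hmC : (m : ℂ) ≠ 0 := by exact_mod_cast hm
  have hdC : (d : ℂ) ≠ 0 := by exact_mod_cast hd
  have hDC := congrArg (fun x : ℝ => (x : ℂ)) hD
  push_cast at hDC ⊢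
  rw [← sub_eq_zero, ← mul_eq_zero_iff_left hdC, ← mul_eq_zero_iff_left (b := _ + _ + _) hmC]
  apply Eq.congr_left
  field_simp
  linear_combination (-((lam : ℂ) ^ 2 + 1) * f p) * hDC
end

section
/- Let s_{21}, s_{22}, s_{23} : ℝ → ℝ be smooth functions of x², let s_{31}, s_{32}, s_{33} : ℝ → ℝ be smooth functions of x³, set s^{11}(x²,x³) = s_{22}(x²)s_{33}(x³) − s_{23}(x²)s_{32}(x³) and assume s^{11} is nowhere zero, and let λ ∈ ℝ. Then for every smooth function u : ℝ² → ℂ one has L(H u) = H(L u), i.e. the operators L and H commute. -/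
open scoped ContDiff

/-- Partial derivative `∂₂` (first variable of `ℝ × ℝ`, the angular variable `x²`). -/
noncomputable def qd2 (f : ℝ × ℝ → ℂ) (p : ℝ × ℝ) : ℂ :=
  deriv (fun t => f (t, p.2)) p.1

/-- Partial derivative `∂₃` (second variable of `ℝ × ℝ`, the angular variable `x³`). -/
noncomputable def qd3 (f : ℝ × ℝ → ℂ) (p : ℝ × ℝ) : ℂ :=
  deriv (fun t => f (p.1, t)) p.2

/-- `A₂u = −∂₂²u − (λ²+1)·s₂₁(x²)·u`. -/
noncomputable def opA2 (s21 : ℝ → ℝ) (lam : ℝ) (u : ℝ × ℝ → ℂ) (p : ℝ × ℝ) : ℂ :=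
  - qd2 (qd2 u) p - (((lam ^ 2 + 1) * s21 p.1 : ℝ) : ℂ) * u p

/-- `A₃u = −∂₃²u − (λ²+1)·s₃₁(x³)·u`. -/
noncomputable def opA3 (s31 : ℝ → ℝ) (lam : ℝ) (u : ℝ × ℝ → ℂ) (p : ℝ × ℝ) : ℂ :=
  - qd3 (qd3 u) p - (((lam ^ 2 + 1) * s31 p.2 : ℝ) : ℂ) * u p

/-- `L u = −(s₃₃/s^{11})·A₂u + (s₂₃/s^{11})·A₃u`, with `s^{11} = s₂₂s₃₃ − s₂₃s₃₂`. -/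
noncomputable def opL (s21 s22 s23 s31 s32 s33 : ℝ → ℝ) (lam : ℝ)
    (u : ℝ × ℝ → ℂ) (p : ℝ × ℝ) : ℂ :=
  -((s33 p.2 / (s22 p.1 * s33 p.2 - s23 p.1 * s32 p.2) : ℝ) : ℂ) * opA2 s21 lam u p
    + ((s23 p.1 / (s22 p.1 * s33 p.2 - s23 p.1 * s32 p.2) : ℝ) : ℂ) * opA3 s31 lam u p

/-- `H u = (s₃₂/s^{11})·A₂u − (s₂₂/s^{11})·A₃u`, with `s^{11} = s₂₂s₃₃ − s₂₃s₃₂`. -/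
noncomputable def opH (s21 s22 s23 s31 s32 s33 : ℝ → ℝ) (lam : ℝ)
    (u : ℝ × ℝ → ℂ) (p : ℝ × ℝ) : ℂ :=
  ((s32 p.2 / (s22 p.1 * s33 p.2 - s23 p.1 * s32 p.2) : ℝ) : ℂ) * opA2 s21 lam u p
    - ((s22 p.1 / (s22 p.1 * s33 p.2 - s23 p.1 * s32 p.2) : ℝ) : ℂ) * opA3 s31 lam u p

lemma qd2_eq {u : ℝ × ℝ → ℂ} (hu : ContDiff ℝ ∞ u) : qd2 u = fun p => fderiv ℝ u p (1, 0) := by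
  funext p
  have h1 : HasFDerivAt u (fderiv ℝ u p) (p.1, p.2) :=
    ((hu.differentiable (by simp)) p).hasFDerivAt
  have h2 : HasDerivAt (fun t : ℝ => (t, p.2)) ((1 : ℝ), (0 : ℝ)) p.1 :=
    (hasDerivAt_id p.1).prodMk (hasDerivAt_const p.1 p.2)
  exact (h1.comp_hasDerivAt p.1 h2).deriv

lemma qd3_eq {u : ℝ × ℝ → ℂ} (hu : ContDiff ℝ ∞ u) : qd3 u = fun p => fderiv ℝ u p (0, 1) := by
  funext p
  have h1 : HasFDerivAt u (fderiv ℝ u p) (p.1, p.2) :=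
    ((hu.differentiable (by simp)) p).hasFDerivAt
  have h2 : HasDerivAt (fun t : ℝ => (p.1, t)) ((0 : ℝ), (1 : ℝ)) p.2 :=
    (hasDerivAt_const p.2 p.1).prodMk (hasDerivAt_id p.2)
  exact (h1.comp_hasDerivAt p.2 h2).deriv

lemma smooth_fderiv {u : ℝ × ℝ → ℂ} (hu : ContDiff ℝ ∞ u) : ContDiff ℝ ∞ (fderiv ℝ u) :=
  hu.fderiv_right (by simp)

lemma smooth_qd2 {u : ℝ × ℝ → ℂ} (hu : ContDiff ℝ ∞ u) : ContDiff ℝ ∞ (qd2 u) := by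
  rw [qd2_eq hu]
  exact (smooth_fderiv hu).clm_apply contDiff_const

lemma smooth_qd3 {u : ℝ × ℝ → ℂ} (hu : ContDiff ℝ ∞ u) : ContDiff ℝ ∞ (qd3 u) := by
  rw [qd3_eq hu]
  exact (smooth_fderiv hu).clm_apply contDiff_const

lemma qd_comm {u : ℝ × ℝ → ℂ} (hu : ContDiff ℝ ∞ u) : qd2 (qd3 u) = qd3 (qd2 u) := by
  rw [qd2_eq (smooth_qd3 hu), qd3_eq (smooth_qd2 hu), qd2_eq hu, qd3_eq hu]
  funext p
  have hd : DifferentiableAt ℝ (fderiv ℝ u) p := (smooth_fderiv hu).differentiable (by simp) p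
  rw [fderiv_clm_apply hd (by fun_prop), fderiv_clm_apply hd (by fun_prop)]
  have hs : IsSymmSndFDerivAt ℝ u p :=
    hu.contDiffAt.isSymmSndFDerivAt (by
      rw [minSmoothness_of_isRCLikeNormedField]
      exact WithTop.coe_le_coe.2 (le_top : (2 : ℕ∞) ≤ ⊤))
  simpa using hs.eq (1, 0) (0, 1)

lemma qd_comm4 {u : ℝ × ℝ → ℂ} (hu : ContDiff ℝ ∞ u) :
    qd2 (qd2 (qd3 (qd3 u))) = qd3 (qd3 (qd2 (qd2 u))) := by
  rw [qd_comm (smooth_qd3 hu), qd_comm hu, qd_comm (smooth_qd3 (smooth_qd2 hu)),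
    qd_comm (smooth_qd2 hu)]

lemma qd2_lin {g h : ℝ × ℝ → ℂ} (hg : ContDiff ℝ ∞ g) (hh : ContDiff ℝ ∞ h) (a b : ℝ → ℂ) :
    qd2 (fun p => a p.2 * g p + b p.2 * h p) = fun p => a p.2 * qd2 g p + b p.2 * qd2 h p := by
  funext p
  have h1 : DifferentiableAt ℝ (fun t => g (t, p.2)) p.1 :=
    (hg.comp (contDiff_id.prodMk contDiff_const)).differentiable (by simp) p.1
  have h2 : DifferentiableAt ℝ (fun t => h (t, p.2)) p.1 :=
    (hh.comp (contDiff_id.prodMk contDiff_const)).differentiable (by simp) p.1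
  exact ((h1.hasDerivAt.const_mul (a p.2)).add (h2.hasDerivAt.const_mul (b p.2))).deriv

lemma qd3_lin {g h : ℝ × ℝ → ℂ} (hg : ContDiff ℝ ∞ g) (hh : ContDiff ℝ ∞ h) (a b : ℝ → ℂ) :
    qd3 (fun p => a p.1 * g p + b p.1 * h p) = fun p => a p.1 * qd3 g p + b p.1 * qd3 h p := by
  funext p
  have h1 : DifferentiableAt ℝ (fun t => g (p.1, t)) p.2 :=
    (hg.comp (contDiff_const.prodMk contDiff_id)).differentiable (by simp) p.2
  have h2 : DifferentiableAt ℝ (fun t => h (p.1, t)) p.2 :=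
    (hh.comp (contDiff_const.prodMk contDiff_id)).differentiable (by simp) p.2
  exact ((h1.hasDerivAt.const_mul (a p.1)).add (h2.hasDerivAt.const_mul (b p.1))).deriv

lemma opA2_lin (s : ℝ → ℝ) (lam : ℝ) {g h : ℝ × ℝ → ℂ} (hg : ContDiff ℝ ∞ g)
    (hh : ContDiff ℝ ∞ h) (a b : ℝ → ℂ) (p : ℝ × ℝ) :
    opA2 s lam (fun p => a p.2 * g p + b p.2 * h p) p
      = a p.2 * opA2 s lam g p + b p.2 * opA2 s lam h p := by
  unfold opA2
  rw [qd2_lin hg hh, qd2_lin (smooth_qd2 hg) (smooth_qd2 hh)]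
  ring

lemma opA3_lin (s : ℝ → ℝ) (lam : ℝ) {g h : ℝ × ℝ → ℂ} (hg : ContDiff ℝ ∞ g)
    (hh : ContDiff ℝ ∞ h) (a b : ℝ → ℂ) (p : ℝ × ℝ) :
    opA3 s lam (fun p => a p.1 * g p + b p.1 * h p) p
      = a p.1 * opA3 s lam g p + b p.1 * opA3 s lam h p := by
  unfold opA3
  rw [qd3_lin hg hh, qd3_lin (smooth_qd3 hg) (smooth_qd3 hh)]
  ring

lemma opA_comm (s21 s31 : ℝ → ℝ) (lam : ℝ) {u : ℝ × ℝ → ℂ} (hu : ContDiff ℝ ∞ u) (p : ℝ × ℝ) :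
    opA2 s21 lam (opA3 s31 lam u) p = opA3 s31 lam (opA2 s21 lam u) p := by
  have e3 : opA3 s31 lam u = fun p => (fun _ => (-1 : ℂ)) p.2 * qd3 (qd3 u) p
      + (fun t => -(((lam ^ 2 + 1) * s31 t : ℝ) : ℂ)) p.2 * u p := by
    funext p; simp only [opA3]; ring
  have e2 : opA2 s21 lam u = fun p => (fun _ => (-1 : ℂ)) p.1 * qd2 (qd2 u) p
      + (fun t => -(((lam ^ 2 + 1) * s21 t : ℝ) : ℂ)) p.1 * u p := by
    funext p; simp only [opA2]; ring
  rw [e3, e2]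
  refine (opA2_lin s21 lam (smooth_qd3 (smooth_qd3 hu)) hu (fun _ => (-1 : ℂ))
    (fun t => -(((lam ^ 2 + 1) * s31 t : ℝ) : ℂ)) p).trans (Eq.trans ?_
    (opA3_lin s31 lam (smooth_qd2 (smooth_qd2 hu)) hu (fun _ => (-1 : ℂ))
    (fun t => -(((lam ^ 2 + 1) * s21 t : ℝ) : ℂ)) p).symm)
  simp only [opA2, opA3, qd_comm4 hu]
  ring

lemma smooth_opA2 {s : ℝ → ℝ} (hs : ContDiff ℝ ∞ s) (lam : ℝ) {u : ℝ × ℝ → ℂ}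
    (hu : ContDiff ℝ ∞ u) : ContDiff ℝ ∞ (opA2 s lam u) := by
  have h := smooth_qd2 (smooth_qd2 hu)
  have hc : ContDiff ℝ ∞ (fun p : ℝ × ℝ => (((lam ^ 2 + 1) * s p.1 : ℝ) : ℂ)) :=
    Complex.ofRealCLM.contDiff.comp (contDiff_const.mul (hs.comp contDiff_fst))
  exact h.neg.sub (hc.mul hu)

lemma smooth_opA3 {s : ℝ → ℝ} (hs : ContDiff ℝ ∞ s) (lam : ℝ) {u : ℝ × ℝ → ℂ}
    (hu : ContDiff ℝ ∞ u) : ContDiff ℝ ∞ (opA3 s lam u) := by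
  have h := smooth_qd3 (smooth_qd3 hu)
  have hc : ContDiff ℝ ∞ (fun p : ℝ × ℝ => (((lam ^ 2 + 1) * s p.2 : ℝ) : ℂ)) :=
    Complex.ofRealCLM.contDiff.comp (contDiff_const.mul (hs.comp contDiff_snd))
  exact h.neg.sub (hc.mul hu)

/-- **Lemma 2.3(1).** The angular operators `L` and `H` arising from separation of variables
on a Stäckel manifold commute on smooth functions. -/
theorem stmt6 (s21 s22 s23 s31 s32 s33 : ℝ → ℝ) (lam : ℝ)
    (h21 : ContDiff ℝ ∞ s21) (h22 : ContDiff ℝ ∞ s22) (h23 : ContDiff ℝ ∞ s23)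
    (h31 : ContDiff ℝ ∞ s31) (h32 : ContDiff ℝ ∞ s32) (h33 : ContDiff ℝ ∞ s33)
    (hm11 : ∀ p : ℝ × ℝ, s22 p.1 * s33 p.2 - s23 p.1 * s32 p.2 ≠ 0) :
    ∀ u : ℝ × ℝ → ℂ, ContDiff ℝ ∞ u →
      ∀ p : ℝ × ℝ,
        opL s21 s22 s23 s31 s32 s33 lam (opH s21 s22 s23 s31 s32 s33 lam u) p
          = opH s21 s22 s23 s31 s32 s33 lam (opL s21 s22 s23 s31 s32 s33 lam u) p := by
  intro u hu p
  have hD : ContDiff ℝ ∞ (fun p : ℝ × ℝ => s22 p.1 * s33 p.2 - s23 p.1 * s32 p.2) :=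
    ((h22.comp contDiff_fst).mul (h33.comp contDiff_snd)).sub
      ((h23.comp contDiff_fst).mul (h32.comp contDiff_snd))
  have q1 : ∀ s : ℝ → ℝ, ContDiff ℝ ∞ s → ContDiff ℝ ∞ (fun p : ℝ × ℝ =>
      ((s p.1 / (s22 p.1 * s33 p.2 - s23 p.1 * s32 p.2) : ℝ) : ℂ)) := fun s hs =>
    Complex.ofRealCLM.contDiff.comp ((hs.comp contDiff_fst).div hD hm11)
  have q2 : ∀ s : ℝ → ℝ, ContDiff ℝ ∞ s → ContDiff ℝ ∞ (fun p : ℝ × ℝ =>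
      ((s p.2 / (s22 p.1 * s33 p.2 - s23 p.1 * s32 p.2) : ℝ) : ℂ)) := fun s hs =>
    Complex.ofRealCLM.contDiff.comp ((hs.comp contDiff_snd).div hD hm11)
  have a2 := smooth_opA2 h21 lam hu
  have a3 := smooth_opA3 h31 lam hu
  have hw : ContDiff ℝ ∞ (opL s21 s22 s23 s31 s32 s33 lam u) :=
    ((q2 s33 h33).neg.mul a2).add ((q1 s23 h23).mul a3)
  have hv : ContDiff ℝ ∞ (opH s21 s22 s23 s31 s32 s33 lam u) :=
    ((q2 s32 h32).mul a2).sub ((q1 s22 h22).mul a3)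
  have hc : ∀ p : ℝ × ℝ,
      (s22 p.1 : ℂ) * (s33 p.2 : ℂ) - (s23 p.1 : ℂ) * (s32 p.2 : ℂ) ≠ 0 := fun p => by
    exact_mod_cast hm11 p
  have e2 : opA2 s21 lam u = fun p =>
      (fun t => -(s22 t : ℂ)) p.1 * opL s21 s22 s23 s31 s32 s33 lam u p
      + (fun t => -(s23 t : ℂ)) p.1 * opH s21 s22 s23 s31 s32 s33 lam u p := by
    funext p
    have := hc p
    simp only [opL, opH]
    push_cast
    field_simp
    ring
  have e3 : opA3 s31 lam u = fun p =>
      (fun t => -(s32 t : ℂ)) p.2 * opL s21 s22 s23 s31 s32 s33 lam u p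
      + (fun t => -(s33 t : ℂ)) p.2 * opH s21 s22 s23 s31 s32 s33 lam u p := by
    funext p
    have := hc p
    simp only [opL, opH]
    push_cast
    linear_combination (-(opA3 s31 lam u p)) * (mul_inv_cancel₀ this)
  have key := opA_comm s21 s31 lam hu p
  rw [e3, e2] at key
  have k2 := opA2_lin s21 lam hw hv (fun t => -(s32 t : ℂ)) (fun t => -(s33 t : ℂ)) p
  have k3 := opA3_lin s31 lam hw hv (fun t => -(s22 t : ℂ)) (fun t => -(s23 t : ℂ)) p
  replace key := k2.symm.trans (key.trans k3)
  clear k2 k3 e2 e3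
  generalize opL s21 s22 s23 s31 s32 s33 lam u = w at *
  generalize opH s21 s22 s23 s31 s32 s33 lam u = v at *
  have := hc p
  simp only [opL, opH]
  push_cast
  linear_combination ((s22 p.1 : ℂ) * (s33 p.2 : ℂ) - (s23 p.1 : ℂ) * (s32 p.2 : ℂ))⁻¹ * key
end

section
/- Let B, C > 0, let s_{21}, s_{22}, s_{23} : ℝ → ℝ be smooth B-periodic functions of x², let s_{31}, s_{32}, s_{33} : ℝ → ℝ be smooth C-periodic functions of x³, set s^{11}(x²,x³) = s_{22}(x²)s_{33}(x³) − s_{23}(x²)s_{32}(x³) and assume s^{11} > 0 everywhere, and let λ ∈ ℝ. Then for all smooth functions u, v : ℝ² → ℂ that are B-periodic in x² and C-periodic in x³, ∫₀^B ∫₀^C (L u)(x²,x³)·conj(v(x²,x³))·s^{11}(x²,x³) dx³ dx² = ∫₀^B ∫₀^C u(x²,x³)·conj((L v)(x²,x³))·s^{11}(x²,x³) dx³ dx², i.e. L is symmetric for the weighted inner product with weight s^{11}. -/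
open scoped ContDiff
open MeasureTheory

lemma aux_1d (T : ℝ) (f g : ℝ → ℂ) (hf : ContDiff ℝ ∞ f) (hg : ContDiff ℝ ∞ g)
    (hfT : ∀ x, f (x + T) = f x) (hgT : ∀ x, g (x + T) = g x) :
    ∫ x in (0 : ℝ)..T, (deriv (deriv f) x * (starRingEnd ℂ) (g x)
      - f x * (starRingEnd ℂ) (deriv (deriv g) x)) = 0 := by
  have hf1 : ContDiff ℝ ∞ (deriv f) := (contDiff_infty_iff_deriv.1 hf).2
  have hg1 : ContDiff ℝ ∞ (deriv g) := (contDiff_infty_iff_deriv.1 hg).2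
  have hf2 : ContDiff ℝ ∞ (deriv (deriv f)) := (contDiff_infty_iff_deriv.1 hf1).2
  have hg2 : ContDiff ℝ ∞ (deriv (deriv g)) := (contDiff_infty_iff_deriv.1 hg1).2
  have hd : ∀ h : ℝ → ℂ, ContDiff ℝ ∞ h → ∀ x, HasDerivAt h (deriv h x) x := fun h hh x =>
    ((hh.differentiable (by simp)) x).hasDerivAt
  have hper : ∀ h : ℝ → ℂ, (∀ x, h (x + T) = h x) → deriv h T = deriv h 0 := by
    intro h hh
    have h1 : (fun x => h (x + T)) = h := funext hh
    have h2 := deriv_comp_add_const h T 0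
    rw [h1, zero_add] at h2
    exact h2.symm
  have key : ∀ x ∈ Set.uIcc 0 T, HasDerivAt
      (fun x => deriv f x * (starRingEnd ℂ) (g x) - f x * (starRingEnd ℂ) (deriv g x))
      (deriv (deriv f) x * (starRingEnd ℂ) (g x)
      - f x * (starRingEnd ℂ) (deriv (deriv g) x)) x := by
    intro x _
    have a := ((hd _ hf1 x).mul (hd _ hg x).star).sub ((hd _ hf x).mul (hd _ hg1 x).star)
    refine a.congr_deriv ?_
    simp only [starRingEnd_apply]
    ring
  rw [intervalIntegral.integral_eq_sub_of_hasDerivAt key]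
  · have e1 := hfT 0
    have e2 := hgT 0
    rw [zero_add] at e1 e2
    rw [hper f hfT, hper g hgT, e1, e2, sub_self]
  · apply Continuous.intervalIntegrable
    have := hf2.continuous
    have := hg2.continuous
    have := hf.continuous
    have := hg.continuous
    have hc := Complex.continuous_conj
    fun_prop

lemma aux_qd2 (f : ℝ × ℝ → ℂ) (hf : ContDiff ℝ ∞ f) : ContDiff ℝ ∞ (qd2 f) := by
  have : qd2 f = fun p => fderiv ℝ f p (1, 0) := by
    funext p
    have h1 : HasFDerivAt f (fderiv ℝ f p) (p.1, p.2) :=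
      (hf.differentiable (by simp) p).hasFDerivAt
    have h2 : HasDerivAt (fun t : ℝ => (t, p.2)) ((1 : ℝ), (0 : ℝ)) p.1 :=
      (hasDerivAt_id p.1).prodMk (hasDerivAt_const p.1 p.2)
    exact (h1.comp_hasDerivAt p.1 h2).deriv
  rw [this]
  exact (hf.fderiv_right (m := ∞) (by simp)).clm_apply contDiff_const

lemma aux_qd3 (f : ℝ × ℝ → ℂ) (hf : ContDiff ℝ ∞ f) : ContDiff ℝ ∞ (qd3 f) := by
  have : qd3 f = fun p => fderiv ℝ f p (0, 1) := by
    funext p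
    have h1 : HasFDerivAt f (fderiv ℝ f p) (p.1, p.2) :=
      (hf.differentiable (by simp) p).hasFDerivAt
    have h2 : HasDerivAt (fun t : ℝ => (p.1, t)) ((0 : ℝ), (1 : ℝ)) p.2 :=
      (hasDerivAt_const p.2 p.1).prodMk (hasDerivAt_id p.2)
    exact (h1.comp_hasDerivAt p.2 h2).deriv
  rw [this]
  exact (hf.fderiv_right (m := ∞) (by simp)).clm_apply contDiff_const

/-- **Lemma 2.3(3).** The angular operator `L` is symmetric for the inner product of
`L²(𝕋², s^{11} dx² dx³)` on smooth doubly periodic functions. -/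
theorem stmt7 (B C lam : ℝ) (hB : 0 < B) (hC : 0 < C)
    (s21 s22 s23 s31 s32 s33 : ℝ → ℝ)
    (h21 : ContDiff ℝ ∞ s21) (h22 : ContDiff ℝ ∞ s22) (h23 : ContDiff ℝ ∞ s23)
    (h31 : ContDiff ℝ ∞ s31) (h32 : ContDiff ℝ ∞ s32) (h33 : ContDiff ℝ ∞ s33)
    (hp21 : Function.Periodic s21 B) (hp22 : Function.Periodic s22 B)
    (hp23 : Function.Periodic s23 B)
    (hp31 : Function.Periodic s31 C) (hp32 : Function.Periodic s32 C)
    (hp33 : Function.Periodic s33 C)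
    (hm11 : ∀ p : ℝ × ℝ, 0 < s22 p.1 * s33 p.2 - s23 p.1 * s32 p.2)
    (u v : ℝ × ℝ → ℂ) (hu : ContDiff ℝ ∞ u) (hv : ContDiff ℝ ∞ v)
    (huB : ∀ x y : ℝ, u (x + B, y) = u (x, y)) (huC : ∀ x y : ℝ, u (x, y + C) = u (x, y))
    (hvB : ∀ x y : ℝ, v (x + B, y) = v (x, y)) (hvC : ∀ x y : ℝ, v (x, y + C) = v (x, y)) :
    (∫ x in (0 : ℝ)..B, ∫ y in (0 : ℝ)..C,
        opL s21 s22 s23 s31 s32 s33 lam u (x, y) * (starRingEnd ℂ) (v (x, y))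
          * ((s22 x * s33 y - s23 x * s32 y : ℝ) : ℂ))
      = ∫ x in (0 : ℝ)..B, ∫ y in (0 : ℝ)..C,
          u (x, y) * (starRingEnd ℂ) (opL s21 s22 s23 s31 s32 s33 lam v (x, y))
            * ((s22 x * s33 y - s23 x * s32 y : ℝ) : ℂ) := by
  have hc := Complex.continuous_conj
  have cr := Complex.continuous_ofReal
  have cu := hu.continuous
  have cv := hv.continuous
  have cu2 := (aux_qd2 _ (aux_qd2 u hu)).continuous
  have cv2 := (aux_qd2 _ (aux_qd2 v hv)).continuous
  have cu3 := (aux_qd3 _ (aux_qd3 u hu)).continuous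
  have cv3 := (aux_qd3 _ (aux_qd3 v hv)).continuous
  have c21 := h21.continuous
  have c23 := h23.continuous
  have c31 := h31.continuous
  have c33 := h33.continuous
  -- the three pieces
  let D2 : ℝ → ℝ → ℂ := fun x y => (s33 y : ℂ) *
    (qd2 (qd2 u) (x, y) * (starRingEnd ℂ) (v (x, y))
      - u (x, y) * (starRingEnd ℂ) (qd2 (qd2 v) (x, y)))
  let D3 : ℝ → ℝ → ℂ := fun x y => (s23 x : ℂ) *
    (qd3 (qd3 u) (x, y) * (starRingEnd ℂ) (v (x, y))
      - u (x, y) * (starRingEnd ℂ) (qd3 (qd3 v) (x, y)))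
  let R : ℝ → ℝ → ℂ := fun x y =>
    ((s33 y : ℂ) * (starRingEnd ℂ) (qd2 (qd2 v) (x, y))
      - (s23 x : ℂ) * (starRingEnd ℂ) (qd3 (qd3 v) (x, y))
      + ((s33 y * ((lam ^ 2 + 1) * s21 x) - s23 x * ((lam ^ 2 + 1) * s31 y) : ℝ) : ℂ)
        * (starRingEnd ℂ) (v (x, y))) * u (x, y)
  have cD2 : Continuous (Function.uncurry D2) := by
    simp only [D2, Function.uncurry_def]; fun_prop
  have cD3 : Continuous (Function.uncurry D3) := by
    simp only [D3, Function.uncurry_def]; fun_prop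
  have cR : Continuous (Function.uncurry R) := by
    simp only [R, Function.uncurry_def]; fun_prop
  have hne : ∀ x y, ((s22 x : ℂ) * s33 y - s23 x * s32 y) ≠ 0 := by
    intro x y
    have := (hm11 (x, y)).ne'
    exact_mod_cast this
  have hl : ∀ x y, opL s21 s22 s23 s31 s32 s33 lam u (x, y) * (starRingEnd ℂ) (v (x, y))
          * ((s22 x * s33 y - s23 x * s32 y : ℝ) : ℂ) = R x y + D2 x y - D3 x y := by
    intro x y
    have := hne x y
    simp only [opL, opA2, opA3, R, D2, D3]
    push_cast
    generalize ((s22 x : ℂ) * s33 y - s23 x * s32 y) = w at this ⊢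
    field_simp
    ring
  have hr : ∀ x y, u (x, y) * (starRingEnd ℂ) (opL s21 s22 s23 s31 s32 s33 lam v (x, y))
            * ((s22 x * s33 y - s23 x * s32 y : ℝ) : ℂ) = R x y := by
    intro x y
    have := hne x y
    simp only [opL, opA2, opA3, R, map_add, map_mul, map_neg, map_sub, Complex.conj_ofReal]
    push_cast
    generalize ((s22 x : ℂ) * s33 y - s23 x * s32 y) = w at this ⊢
    field_simp
    ring
  have i3 : ∀ x, ∫ y in (0 : ℝ)..C, D3 x y = 0 := by
    intro x
    simp only [D3]
    rw [intervalIntegral.integral_const_mul]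
    have h := aux_1d C (fun y => u (x, y)) (fun y => v (x, y))
      (hu.comp (contDiff_const.prodMk contDiff_id))
      (hv.comp (contDiff_const.prodMk contDiff_id)) (huC x) (hvC x)
    exact mul_eq_zero_of_right _ h
  have i2 : ∀ y, ∫ x in (0 : ℝ)..B, D2 x y = 0 := by
    intro y
    simp only [D2]
    rw [intervalIntegral.integral_const_mul]
    have h := aux_1d B (fun x => u (x, y)) (fun x => v (x, y))
      (hu.comp (contDiff_id.prodMk contDiff_const))
      (hv.comp (contDiff_id.prodMk contDiff_const)) (fun x => huB x y) (fun x => hvB x y)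
    exact mul_eq_zero_of_right _ h
  have sl : ∀ F : ℝ → ℝ → ℂ, Continuous (Function.uncurry F) → ∀ x,
      IntervalIntegrable (F x) volume 0 C := fun F hF x =>
    (hF.comp (Continuous.prodMk_right x)).intervalIntegrable 0 C
  have ol : ∀ F : ℝ → ℝ → ℂ, Continuous (Function.uncurry F) →
      IntervalIntegrable (fun x => ∫ y in (0 : ℝ)..C, F x y) volume 0 B := fun F hF =>
    (intervalIntegral.continuous_parametric_intervalIntegral_of_continuous' hF 0 C).intervalIntegrable 0 B
  have hsw : ∫ x in (0 : ℝ)..B, ∫ y in (0 : ℝ)..C, D2 x y = 0 := by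
    have h0 : ∀ x, ∫ y in (0 : ℝ)..C, D2 x y = ∫ y in Set.Ioc 0 C, D2 x y := fun x =>
      intervalIntegral.integral_of_le hC.le
    simp only [h0]
    rw [intervalIntegral_integral_swap]
    · simp [i2]
    · rw [Measure.prod_restrict, Set.uIoc_of_le hB.le, ← Measure.volume_eq_prod]
      refine (cD2.continuousOn.integrableOn_compact
        (isCompact_Icc.prod isCompact_Icc : IsCompact (Set.Icc 0 B ×ˢ Set.Icc 0 C))).mono_set ?_
      exact Set.prod_mono Set.Ioc_subset_Icc_self Set.Ioc_subset_Icc_self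
  simp only [hl, hr]
  have e : ∀ x, ∫ y in (0 : ℝ)..C, (R x y + D2 x y - D3 x y)
      = (∫ y in (0 : ℝ)..C, R x y) + ∫ y in (0 : ℝ)..C, D2 x y := by
    intro x
    rw [intervalIntegral.integral_sub ((sl R cR x).add (sl D2 cD2 x)) (sl D3 cD3 x),
      intervalIntegral.integral_add (sl R cR x) (sl D2 cD2 x), i3, sub_zero]
  simp only [e]
  rw [intervalIntegral.integral_add (ol R cR) (ol D2 cD2), hsw, add_zero]
end

section
/- Let B, C > 0, let s_{21}, s_{22}, s_{23} : ℝ → ℝ be smooth B-periodic functions of x² with s_{23} > 0 everywhere, let s_{31}, s_{32}, s_{33} : ℝ → ℝ be smooth C-periodic functions of x³ with s_{33} < 0 everywhere, set s^{11}(x²,x³) = s_{22}(x²)s_{33}(x³) − s_{23}(x²)s_{32}(x³) and assume s^{11} > 0 everywhere, and let λ ∈ ℝ. Then there exists m ∈ ℝ such that for every smooth u : ℝ² → ℂ that is B-periodic in x² and C-periodic in x³, Re ∫₀^B ∫₀^C (L u)·conj(u)·s^{11} dx³ dx² ≥ m·∫₀^B ∫₀^C |u|²·s^{11} dx³ dx².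 -/
open scoped ContDiff
open MeasureTheory

theorem aux_1d_s8 (T : ℝ) (hT : 0 < T) (v : ℝ → ℂ) (hv : ContDiff ℝ ∞ v)
    (hp : ∀ x, v (x + T) = v x) :
    ∫ x in (0:ℝ)..T, (deriv (deriv v) x * (starRingEnd ℂ) (v x)).re ≤ 0 := by
  have hv1 : ContDiff ℝ ∞ (deriv v) := (contDiff_infty_iff_deriv.1 hv).2
  have hv2 : ContDiff ℝ ∞ (deriv (deriv v)) := (contDiff_infty_iff_deriv.1 hv1).2
  have c0 := hv.continuous
  have c1 := hv1.continuous
  have c2 := hv2.continuous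
  have hcc : Continuous (starRingEnd ℂ) := Complex.continuous_conj
  have hd0 : ∀ x, HasDerivAt v (deriv v x) x := fun x =>
    ((contDiff_infty_iff_deriv.1 hv).1 x).hasDerivAt
  have hd1 : ∀ x, HasDerivAt (deriv v) (deriv (deriv v) x) x := fun x =>
    ((contDiff_infty_iff_deriv.1 hv1).1 x).hasDerivAt
  have hpd : ∀ x, deriv v (x + T) = deriv v x := by
    intro x
    rw [← deriv_comp_add_const]
    congr 1
    exact funext hp
  have key : ∀ x, HasDerivAt (fun x => (deriv v x * (starRingEnd ℂ) (v x)).re)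
      ((deriv (deriv v) x * (starRingEnd ℂ) (v x)).re + ‖deriv v x‖ ^ 2) x := by
    intro x
    have h1 := (hd1 x).mul ((hd0 x).star)
    have h2 := Complex.reCLM.hasFDerivAt.comp_hasDerivAt x h1
    refine HasDerivAt.congr_deriv h2 ?_
    simp [← Complex.normSq_eq_norm_sq, Complex.normSq_apply]
  have hint := intervalIntegral.integral_eq_sub_of_hasDerivAt (a := 0) (b := T)
    (fun x _ => key x) (Continuous.intervalIntegrable (by fun_prop) _ _)
  have e1 := hpd 0
  have e2 := hp 0
  rw [zero_add] at e1 e2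
  rw [e1, e2, sub_self, intervalIntegral.integral_add
    (Continuous.intervalIntegrable (by fun_prop) _ _)
    (Continuous.intervalIntegrable (by fun_prop) _ _)] at hint
  have hnn : 0 ≤ ∫ x in (0:ℝ)..T, ‖deriv v x‖ ^ 2 :=
    intervalIntegral.integral_nonneg hT.le (fun x _ => by positivity)
  linarith

theorem qd2_smooth (u : ℝ × ℝ → ℂ) (hu : ContDiff ℝ ∞ u) : ContDiff ℝ ∞ (qd2 u) := by
  have : qd2 u = fun p => fderiv ℝ u p (1, 0) := by
    funext p
    have h := (hu.differentiable (by simp) p).hasFDerivAt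
    have hl : HasDerivAt (fun t : ℝ => (t, p.2)) ((1:ℝ), (0:ℝ)) p.1 :=
      (hasDerivAt_id p.1).prodMk (hasDerivAt_const p.1 p.2)
    exact (HasFDerivAt.comp_hasDerivAt p.1 (f := fun t : ℝ => (t, p.2)) h hl).deriv
  rw [this]
  exact (hu.fderiv_right (m := ∞) (by simp)).clm_apply contDiff_const

theorem qd3_smooth (u : ℝ × ℝ → ℂ) (hu : ContDiff ℝ ∞ u) : ContDiff ℝ ∞ (qd3 u) := by
  have : qd3 u = fun p => fderiv ℝ u p (0, 1) := by
    funext p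
    have h := (hu.differentiable (by simp) p).hasFDerivAt
    have hl : HasDerivAt (fun t : ℝ => (p.1, t)) ((0:ℝ), (1:ℝ)) p.2 :=
      (hasDerivAt_const p.2 p.1).prodMk (hasDerivAt_id p.2)
    exact (HasFDerivAt.comp_hasDerivAt p.2 (f := fun t : ℝ => (p.1, t)) h hl).deriv
  rw [this]
  exact (hu.fderiv_right (m := ∞) (by simp)).clm_apply contDiff_const

theorem swap_cont (B C : ℝ) (F : ℝ → ℝ → ℝ) (hF : Continuous F.uncurry) :
    ∫ x in (0:ℝ)..B, ∫ y in (0:ℝ)..C, F x y = ∫ y in (0:ℝ)..C, ∫ x in (0:ℝ)..B, F x y := by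
  apply intervalIntegral_intervalIntegral_swap
  refine IntegrableOn.mono_set (t := Set.uIcc 0 B ×ˢ Set.uIcc 0 C) ?_
    (Set.prod_mono Set.uIoc_subset_uIcc Set.uIoc_subset_uIcc)
  exact hF.continuousOn.integrableOn_compact (isCompact_uIcc.prod isCompact_uIcc)

theorem re_double (B C : ℝ) (F : ℝ → ℝ → ℂ) (hF : Continuous F.uncurry) :
    (∫ x in (0:ℝ)..B, ∫ y in (0:ℝ)..C, F x y).re
      = ∫ x in (0:ℝ)..B, ∫ y in (0:ℝ)..C, (F x y).re := by
  have h1 : Continuous fun x => ∫ y in (0:ℝ)..C, F x y :=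
    intervalIntegral.continuous_parametric_intervalIntegral_of_continuous' hF _ _
  have h2 : ∀ x, Continuous (F x) := fun x => hF.comp (by fun_prop : Continuous fun y => (x, y))
  have := Complex.reCLM.intervalIntegral_comp_comm (h1.intervalIntegrable (μ := volume) 0 B)
  simp only [Complex.reCLM_apply] at this
  rw [← this]
  congr 1
  funext x
  exact (Complex.reCLM.intervalIntegral_comp_comm
    ((h2 x).intervalIntegrable (μ := volume) 0 C)).symm

theorem add_double (B C : ℝ) (F G : ℝ → ℝ → ℝ) (hF : Continuous F.uncurry)
    (hG : Continuous G.uncurry) :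
    ∫ x in (0:ℝ)..B, ∫ y in (0:ℝ)..C, (F x y + G x y)
      = (∫ x in (0:ℝ)..B, ∫ y in (0:ℝ)..C, F x y)
        + ∫ x in (0:ℝ)..B, ∫ y in (0:ℝ)..C, G x y := by
  have h1 : Continuous fun x => ∫ y in (0:ℝ)..C, F x y :=
    intervalIntegral.continuous_parametric_intervalIntegral_of_continuous' hF _ _
  have h1' : Continuous fun x => ∫ y in (0:ℝ)..C, G x y :=
    intervalIntegral.continuous_parametric_intervalIntegral_of_continuous' hG _ _
  have h2 : ∀ x, Continuous (F x) := fun x => hF.comp (by fun_prop : Continuous fun y => (x, y))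
  have h2' : ∀ x, Continuous (G x) := fun x => hG.comp (by fun_prop : Continuous fun y => (x, y))
  rw [← intervalIntegral.integral_add (h1.intervalIntegrable _ _) (h1'.intervalIntegrable _ _)]
  congr 1
  funext x
  exact intervalIntegral.integral_add ((h2 x).intervalIntegrable _ _)
    ((h2' x).intervalIntegrable _ _)

theorem mono_double (B C : ℝ) (hB : 0 < B) (hC : 0 < C) (F G : ℝ → ℝ → ℝ)
    (hF : Continuous F.uncurry) (hG : Continuous G.uncurry)
    (h : ∀ x ∈ Set.Icc 0 B, ∀ y ∈ Set.Icc 0 C, F x y ≤ G x y) :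
    ∫ x in (0:ℝ)..B, ∫ y in (0:ℝ)..C, F x y ≤ ∫ x in (0:ℝ)..B, ∫ y in (0:ℝ)..C, G x y := by
  have h1 : Continuous fun x => ∫ y in (0:ℝ)..C, F x y :=
    intervalIntegral.continuous_parametric_intervalIntegral_of_continuous' hF _ _
  have h1' : Continuous fun x => ∫ y in (0:ℝ)..C, G x y :=
    intervalIntegral.continuous_parametric_intervalIntegral_of_continuous' hG _ _
  have h2 : ∀ x, Continuous (F x) := fun x => hF.comp (by fun_prop : Continuous fun y => (x, y))
  have h2' : ∀ x, Continuous (G x) := fun x => hG.comp (by fun_prop : Continuous fun y => (x, y))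
  refine intervalIntegral.integral_mono_on hB.le (h1.intervalIntegrable _ _)
    (h1'.intervalIntegrable _ _) fun x hx => ?_
  exact intervalIntegral.integral_mono_on hC.le ((h2 x).intervalIntegrable _ _)
    ((h2' x).intervalIntegrable _ _) fun y hy => h x hx y hy

/-- **Lemma 2.3(4).** The angular operator `L` is semibounded from below on
`L²(𝕋², s^{11} dx² dx³)`. -/
theorem stmt8 (B C lam : ℝ) (hB : 0 < B) (hC : 0 < C)
    (s21 s22 s23 s31 s32 s33 : ℝ → ℝ)
    (h21 : ContDiff ℝ ∞ s21) (h22 : ContDiff ℝ ∞ s22) (h23 : ContDiff ℝ ∞ s23)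
    (h31 : ContDiff ℝ ∞ s31) (h32 : ContDiff ℝ ∞ s32) (h33 : ContDiff ℝ ∞ s33)
    (hp21 : Function.Periodic s21 B) (hp22 : Function.Periodic s22 B)
    (hp23 : Function.Periodic s23 B)
    (hp31 : Function.Periodic s31 C) (hp32 : Function.Periodic s32 C)
    (hp33 : Function.Periodic s33 C)
    (h23pos : ∀ x : ℝ, 0 < s23 x) (h33neg : ∀ x : ℝ, s33 x < 0)
    (hm11 : ∀ p : ℝ × ℝ, 0 < s22 p.1 * s33 p.2 - s23 p.1 * s32 p.2) :
    ∃ m : ℝ, ∀ u : ℝ × ℝ → ℂ, ContDiff ℝ ∞ u →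
      (∀ x y : ℝ, u (x + B, y) = u (x, y)) → (∀ x y : ℝ, u (x, y + C) = u (x, y)) →
      m * (∫ x in (0 : ℝ)..B, ∫ y in (0 : ℝ)..C,
            ‖u (x, y)‖ ^ 2 * (s22 x * s33 y - s23 x * s32 y))
        ≤ (∫ x in (0 : ℝ)..B, ∫ y in (0 : ℝ)..C,
            opL s21 s22 s23 s31 s32 s33 lam u (x, y) * (starRingEnd ℂ) (u (x, y))
              * ((s22 x * s33 y - s23 x * s32 y : ℝ) : ℂ)).re := by
  have c21 := h21.continuous
  have c22 := h22.continuous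
  have c23 := h23.continuous
  have c31 := h31.continuous
  have c32 := h32.continuous
  have c33 := h33.continuous
  have hcc : Continuous (starRingEnd ℂ) := Complex.continuous_conj
  have hkc : Continuous fun p : ℝ × ℝ => (lam ^ 2 + 1) * (s33 p.2 * s21 p.1 - s23 p.1 * s31 p.2)
      / (s22 p.1 * s33 p.2 - s23 p.1 * s32 p.2) :=
    Continuous.div (by fun_prop) (by fun_prop) fun p => (hm11 p).ne'
  obtain ⟨m, hm⟩ := (((isCompact_Icc (a := (0:ℝ)) (b := B)).prod
    (isCompact_Icc (a := (0:ℝ)) (b := C))).image hkc).bddBelow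
  refine ⟨m, fun u hu hpx hpy => ?_⟩
  have cu := hu.continuous
  have cg2 := (qd2_smooth _ (qd2_smooth u hu)).continuous
  have cg3 := (qd3_smooth _ (qd3_smooth u hu)).continuous
  have hpt : ∀ x y, opL s21 s22 s23 s31 s32 s33 lam u (x, y) * (starRingEnd ℂ) (u (x, y))
      * ((s22 x * s33 y - s23 x * s32 y : ℝ) : ℂ)
      = (s33 y : ℂ) * (qd2 (qd2 u) (x, y) * (starRingEnd ℂ) (u (x, y)))
        + (-(s23 x : ℂ)) * (qd3 (qd3 u) (x, y) * (starRingEnd ℂ) (u (x, y)))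
        + (((lam ^ 2 + 1) * (s33 y * s21 x - s23 x * s31 y) * ‖u (x, y)‖ ^ 2 : ℝ) : ℂ) := by
    intro x y
    have h0 : ((s22 x * s33 y - s23 x * s32 y : ℝ) : ℂ) ≠ 0 :=
      Complex.ofReal_ne_zero.2 (hm11 (x, y)).ne'
    have hn : ((‖u (x, y)‖ : ℝ) : ℂ) ^ 2 = u (x, y) * (starRingEnd ℂ) (u (x, y)) :=
      (Complex.mul_conj' _).symm
    simp only [opL, opA2, opA3, Complex.ofReal_div]
    rw [Complex.ofReal_mul _ (‖u (x, y)‖ ^ 2), Complex.ofReal_pow ‖u (x, y)‖, hn]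
    generalize ((s22 x * s33 y - s23 x * s32 y : ℝ) : ℂ) = d at h0
    field_simp
    push_cast
    ring
  simp only [hpt]
  rw [re_double _ _ _ (by simp only [Function.uncurry_def]; fun_prop)]
  simp only [Complex.add_re, ← Complex.ofReal_neg, Complex.re_ofReal_mul, Complex.ofReal_re]
  rw [add_double B C (fun x y => s33 y * (qd2 (qd2 u) (x, y) * (starRingEnd ℂ) (u (x, y))).re
        + (-(s23 x)) * (qd3 (qd3 u) (x, y) * (starRingEnd ℂ) (u (x, y))).re)
      (fun x y => (lam ^ 2 + 1) * (s33 y * s21 x - s23 x * s31 y) * ‖u (x, y)‖ ^ 2)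
      (by simp only [Function.uncurry_def]; fun_prop)
      (by simp only [Function.uncurry_def]; fun_prop),
    add_double B C (fun x y => s33 y * (qd2 (qd2 u) (x, y) * (starRingEnd ℂ) (u (x, y))).re)
      (fun x y => (-(s23 x)) * (qd3 (qd3 u) (x, y) * (starRingEnd ℂ) (u (x, y))).re)
      (by simp only [Function.uncurry_def]; fun_prop)
      (by simp only [Function.uncurry_def]; fun_prop)]
  have hI2 : 0 ≤ ∫ x in (0:ℝ)..B, ∫ y in (0:ℝ)..C,
      s33 y * (qd2 (qd2 u) (x, y) * (starRingEnd ℂ) (u (x, y))).re := by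
    rw [swap_cont _ _ _ (by simp only [Function.uncurry_def]; fun_prop)]
    refine intervalIntegral.integral_nonneg hC.le fun y _ => ?_
    rw [intervalIntegral.integral_const_mul]
    exact mul_nonneg_of_nonpos_of_nonpos (h33neg y).le
      (aux_1d_s8 B hB (fun t => u (t, y)) (hu.comp (contDiff_id.prodMk contDiff_const))
        fun x => hpx x y)
  have hI3 : 0 ≤ ∫ x in (0:ℝ)..B, ∫ y in (0:ℝ)..C,
      (-(s23 x)) * (qd3 (qd3 u) (x, y) * (starRingEnd ℂ) (u (x, y))).re := by
    refine intervalIntegral.integral_nonneg hB.le fun x _ => ?_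
    rw [intervalIntegral.integral_const_mul]
    exact mul_nonneg_of_nonpos_of_nonpos (neg_nonpos.2 (h23pos x).le)
      (aux_1d_s8 C hC (fun t => u (x, t)) (hu.comp (contDiff_const.prodMk contDiff_id))
        fun y => hpy x y)
  have hI1 : m * (∫ x in (0 : ℝ)..B, ∫ y in (0 : ℝ)..C,
            ‖u (x, y)‖ ^ 2 * (s22 x * s33 y - s23 x * s32 y))
      ≤ ∫ x in (0:ℝ)..B, ∫ y in (0:ℝ)..C,
        (lam ^ 2 + 1) * (s33 y * s21 x - s23 x * s31 y) * ‖u (x, y)‖ ^ 2 := by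
    simp only [← intervalIntegral.integral_const_mul]
    refine mono_double B C hB hC _ _ (by simp only [Function.uncurry_def]; fun_prop)
      (by simp only [Function.uncurry_def]; fun_prop) fun x hx y hy => ?_
    have h := hm (Set.mem_image_of_mem _ (Set.mk_mem_prod hx hy))
    have hd := hm11 (x, y)
    simp only at h hd
    rw [le_div_iff₀ hd] at h
    nlinarith [mul_le_mul_of_nonneg_right h (sq_nonneg ‖u (x, y)‖)]
  linarith
end

section
/- Let λ ∈ ℝ and B, C > 0. Let s_{21}, s_{22}, s_{23} : ℝ → ℝ be continuous B-periodic with s_{22} < 0 and s_{23} > 0 everywhere, and let s_{31}, s_{32}, s_{33} : ℝ → ℝ be continuous C-periodic with s_{32} > 0 and s_{33} < 0 everywhere. Let μ², ν² ∈ ℝ with μ² ≥ 0, and suppose there exist C² functions v, w : ℝ → ℝ, not identically zero, with v B-periodic, w C-periodic, satisfying −v'' + [−(λ²+1)s_{21} + μ²s_{22} + ν²s_{23}]·v = 0 and −w'' + [−(λ²+1)s_{31} + μ²s_{32} + ν²s_{33}]·w = 0 on ℝ. Then C₁·μ² + D₁ ≤ ν² ≤ C₂·μ² + D₂, where C₁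 = min(−s_{32}/s_{33}), D₁ = (λ²+1)·min(s_{31}/s_{33}), C₂ = max(−s_{22}/s_{23}), D₂ = (λ²+1)·max(s_{21}/s_{23}) (minima and maxima taken over one period). -/
theorem stmt9_aux (P : ℝ) (hP : 0 < P) (q v : ℝ → ℝ) (hq : Function.Periodic q P)
    (hv : ContDiff ℝ 2 v) (hv0 : ∃ x, v x ≠ 0) (hvper : Function.Periodic v P)
    (heq : ∀ x, - deriv (deriv v) x + q x * v x = 0) :
    ∃ x ∈ Set.Icc 0 P, q x ≤ 0 := by
  by_contra! hcon
  have hpos : ∀ x, 0 < q x := by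
    intro x
    obtain ⟨y, hy, hxy⟩ := hq.exists_mem_Ico₀ hP x
    rw [hxy]
    exact hcon y ⟨hy.1, hy.2.le⟩
  have hd1 : ∀ x, HasDerivAt v (deriv v x) x := fun x =>
    (hv.differentiable (by norm_num) x).hasDerivAt
  have hcd : ContDiff ℝ 1 (deriv v) := by
    have h2 : ContDiff ℝ (1 + 1) v := by
      convert hv using 1
      norm_num
    exact (contDiff_succ_iff_deriv.1 h2).2.2
  have hd2 : ∀ x, HasDerivAt (deriv v) (deriv (deriv v) x) x := fun x =>
    (hcd.differentiable (by norm_num) x).hasDerivAt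
  have hdper : ∀ x, deriv v (x + P) = deriv v x := by
    intro x
    rw [← deriv_comp_add_const]
    congr 1
    funext y
    exact hvper y
  have hg : ∀ x, HasDerivAt (fun x => v x * deriv v x)
      (deriv v x ^ 2 + q x * v x ^ 2) x := by
    intro x
    have h := (hd1 x).mul (hd2 x)
    have e : deriv v x * deriv v x + v x * deriv (deriv v) x
        = deriv v x ^ 2 + q x * v x ^ 2 := by
      linear_combination (-v x) * heq x
    rw [e] at h
    exact h
  have hmono : Monotone (fun x => v x * deriv v x) := by
    apply monotone_of_deriv_nonneg (fun x => (hg x).differentiableAt)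
    intro x
    rw [(hg x).deriv]
    have := hpos x
    positivity
  have hgper : Function.Periodic (fun x => v x * deriv v x) P := by
    intro x
    simp only [hdper, hvper x]
  have hconst : ∀ x, v x * deriv v x = v 0 * deriv v 0 := by
    intro x
    obtain ⟨y, hy, hxy⟩ := hgper.exists_mem_Ico₀ hP x
    have h1 := hmono hy.1
    have h2 := hmono hy.2.le
    have h3 := hgper 0
    simp only [zero_add] at h1 h2 h3 hxy
    linarith
  obtain ⟨x, hx⟩ := hv0
  have h0 : HasDerivAt (fun x => v x * deriv v x) 0 x := by
    rw [funext hconst]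
    exact hasDerivAt_const x _
  have h1 := (hg x).unique h0
  have h2 := mul_pos (hpos x) (pow_pos (abs_pos.2 hx) 2)
  rw [sq_abs] at h2
  nlinarith [sq_nonneg (deriv v x)]

/-- **Lemma 2.6.** The coupled angular momenta `(μ², ν²)` of the separated angular equations
of a Stäckel manifold lie in the cone `C₁μ² + D₁ ≤ ν² ≤ C₂μ² + D₂`, where
`C₁ = min(−s₃₂/s₃₃)`, `D₁ = (λ²+1)·min(s₃₁/s₃₃)`, `C₂ = max(−s₂₂/s₂₃)`,
`D₂ = (λ²+1)·max(s₂₁/s₂₃)`, the extrema being taken over one period. -/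
theorem stmt9 (lam B C : ℝ) (hB : 0 < B) (hC : 0 < C)
    (s21 s22 s23 s31 s32 s33 : ℝ → ℝ)
    (hc21 : Continuous s21) (hc22 : Continuous s22) (hc23 : Continuous s23)
    (hc31 : Continuous s31) (hc32 : Continuous s32) (hc33 : Continuous s33)
    (hp21 : Function.Periodic s21 B) (hp22 : Function.Periodic s22 B)
    (hp23 : Function.Periodic s23 B)
    (hp31 : Function.Periodic s31 C) (hp32 : Function.Periodic s32 C)
    (hp33 : Function.Periodic s33 C)
    (h22 : ∀ x, s22 x < 0) (h23 : ∀ x, 0 < s23 x)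
    (h32 : ∀ x, 0 < s32 x) (h33 : ∀ x, s33 x < 0)
    (mu2 nu2 : ℝ) (hmu2 : 0 ≤ mu2)
    (v w : ℝ → ℝ) (hv : ContDiff ℝ 2 v) (hw : ContDiff ℝ 2 w)
    (hv0 : ∃ x, v x ≠ 0) (hw0 : ∃ x, w x ≠ 0)
    (hvper : Function.Periodic v B) (hwper : Function.Periodic w C)
    (hveq : ∀ x, - deriv (deriv v) x
      + (-(lam ^ 2 + 1) * s21 x + mu2 * s22 x + nu2 * s23 x) * v x = 0)
    (hweq : ∀ x, - deriv (deriv w) x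
      + (-(lam ^ 2 + 1) * s31 x + mu2 * s32 x + nu2 * s33 x) * w x = 0) :
    sInf ((fun t => -s32 t / s33 t) '' Set.Icc 0 C) * mu2
        + (lam ^ 2 + 1) * sInf ((fun t => s31 t / s33 t) '' Set.Icc 0 C) ≤ nu2 ∧
    nu2 ≤ sSup ((fun t => -s22 t / s23 t) '' Set.Icc 0 B) * mu2
        + (lam ^ 2 + 1) * sSup ((fun t => s21 t / s23 t) '' Set.Icc 0 B) := by
  have hl : 0 ≤ lam ^ 2 + 1 := by positivity
  constructor
  · obtain ⟨x, hx, hqx⟩ := stmt9_aux C hC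
      (fun x => -(lam ^ 2 + 1) * s31 x + mu2 * s32 x + nu2 * s33 x) w
      (fun x => by simp only [hp31 x, hp32 x, hp33 x]) hw hw0 hwper hweq
    have hb : ∀ f : ℝ → ℝ, Continuous f → sInf (f '' Set.Icc 0 C) ≤ f x := fun f hf =>
      csInf_le (isCompact_Icc.image hf).bddBelow ⟨x, hx, rfl⟩
    have h1 := hb (fun t => -s32 t / s33 t) (hc32.neg.div hc33 fun t => (h33 t).ne)
    have h2 := hb (fun t => s31 t / s33 t) (hc31.div hc33 fun t => (h33 t).ne)
    have h3 := mul_le_mul_of_nonneg_right h1 hmu2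
    have h4 := mul_le_mul_of_nonneg_left h2 hl
    have h5 : -s32 x / s33 x * mu2 + (lam ^ 2 + 1) * (s31 x / s33 x) ≤ nu2 := by
      have e : -s32 x / s33 x * mu2 + (lam ^ 2 + 1) * (s31 x / s33 x)
          = (-s32 x * mu2 + (lam ^ 2 + 1) * s31 x) / s33 x := by ring
      rw [e, div_le_iff_of_neg (h33 x)]
      linarith
    linarith
  · obtain ⟨x, hx, hqx⟩ := stmt9_aux B hB
      (fun x => -(lam ^ 2 + 1) * s21 x + mu2 * s22 x + nu2 * s23 x) v
      (fun x => by simp only [hp21 x, hp22 x, hp23 x]) hv hv0 hvper hveq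
    have hb : ∀ f : ℝ → ℝ, Continuous f → f x ≤ sSup (f '' Set.Icc 0 B) := fun f hf =>
      le_csSup (isCompact_Icc.image hf).bddAbove ⟨x, hx, rfl⟩
    have h1 := hb (fun t => -s22 t / s23 t) (hc22.neg.div hc23 fun t => (h23 t).ne')
    have h2 := hb (fun t => s21 t / s23 t) (hc21.div hc23 fun t => (h23 t).ne')
    have h3 := mul_le_mul_of_nonneg_right h1 hmu2
    have h4 := mul_le_mul_of_nonneg_left h2 hl
    have h5 : nu2 ≤ -s22 x / s23 x * mu2 + (lam ^ 2 + 1) * (s21 x / s23 x) := by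
      have e : -s22 x / s23 x * mu2 + (lam ^ 2 + 1) * (s21 x / s23 x)
          = (-s22 x * mu2 + (lam ^ 2 + 1) * s21 x) / s23 x := by ring
      rw [e, le_div_iff₀ (h23 x)]
      linarith
    linarith
end

section
/- Let I ⊆ ℝ be an open interval, let g, ğ : I → ℝ be C¹ with everywhere positive derivative, with images J, J̆ and inverse functions h : J → I, h̆ : J̆ → I. Let p, p̆ : I → ℝ be differentiable and nowhere zero, and let u, v : I → ℂ be differentiable. Define U(X) = p(h(X))·u(h(X)) and V(X) = p(h(X))·v(h(X)) for X ∈ J, and Ŭ(Y) = p̆(h̆(Y))·u(h̆(Y)), V̆(Y) = p̆(h̆(Y))·v(h̆(Y)) for Y ∈ J̆. Then for every X ∈ J, setting Y = ğ(h(X)): W(U,V)(X) = (p(h(X))/p̆(h(X)))² · (ğ∘h)'(X) · W(Ŭ,V̆)(Y), where W(F,G) = F·G' − F'·G denotes the Wronskian. -/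
/-- The Wronskian `W(F,G) = F·G' − F'·G`. -/
noncomputable def Wr (F G : ℝ → ℂ) (X : ℝ) : ℂ := F X * deriv G X - deriv F X * G X

/-- Derivative of the inverse of a `C¹` function with positive derivative. -/
theorem inv_hasDerivAt (a b : ℝ) (g h : ℝ → ℝ)
    (hg : ContDiffOn ℝ 1 g (Set.Ioo a b)) (hg' : ∀ x ∈ Set.Ioo a b, 0 < deriv g x)
    (hinv : ∀ x ∈ Set.Ioo a b, h (g x) = x) (x : ℝ) (hx : x ∈ Set.Ioo a b) :
    HasDerivAt h (deriv g x)⁻¹ (g x) := by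
  have hn : Set.Ioo a b ∈ nhds x := isOpen_Ioo.mem_nhds hx
  have h1 : HasStrictDerivAt g (deriv g x) x :=
    (hg.contDiffAt hn).hasStrictDerivAt one_ne_zero
  exact (h1.to_local_left_inverse (hg' x hx).ne'
    (Filter.mem_of_superset hn hinv)).hasDerivAt

/-- The Wronskian of weighted functions in the new variable. -/
theorem Wr_comp (h p : ℝ → ℝ) (u v : ℝ → ℂ) (x X c : ℝ) (hX : h X = x)
    (hh : HasDerivAt h c X) (hp : DifferentiableAt ℝ p x)
    (hu : DifferentiableAt ℝ u x) (hv : DifferentiableAt ℝ v x) :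
    Wr (fun Y => (p (h Y) : ℂ) * u (h Y)) (fun Y => (p (h Y) : ℂ) * v (h Y)) X
      = (p x : ℂ) ^ 2 * c * (u x * deriv v x - deriv u x * v x) := by
  subst hX
  have h1 : HasDerivAt (fun Y => (p (h Y) : ℂ)) ((deriv p (h X) * c : ℝ) : ℂ) X :=
    (hp.hasDerivAt.comp X hh).ofReal_comp
  have key : ∀ w : ℝ → ℂ, DifferentiableAt ℝ w (h X) →
      deriv (fun Y => (p (h Y) : ℂ) * w (h Y)) X
        = ((deriv p (h X) * c : ℝ) : ℂ) * w (h X) + (p (h X) : ℂ) * (c • deriv w (h X)) := by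
    intro w hw
    exact (h1.mul (hw.hasDerivAt.scomp X hh)).deriv
  unfold Wr
  rw [key u hu, key v hv]
  simp only [Complex.real_smul]
  push_cast
  ring

/-- **Transformation of Wronskians under a change of Liouville variable and of weight
function** (unnamed Proposition of Section 2.2). -/
theorem stmt11 (a b : ℝ) (g gb h hb : ℝ → ℝ) (p pb : ℝ → ℝ) (u v : ℝ → ℂ)
    (hg : ContDiffOn ℝ 1 g (Set.Ioo a b)) (hgb : ContDiffOn ℝ 1 gb (Set.Ioo a b))
    (hg' : ∀ x ∈ Set.Ioo a b, 0 < deriv g x) (hgb' : ∀ x ∈ Set.Ioo a b, 0 < deriv gb x)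
    (hinv : ∀ x ∈ Set.Ioo a b, h (g x) = x)
    (hbinv : ∀ x ∈ Set.Ioo a b, hb (gb x) = x)
    (hp : ∀ x ∈ Set.Ioo a b, DifferentiableAt ℝ p x ∧ p x ≠ 0)
    (hpb : ∀ x ∈ Set.Ioo a b, DifferentiableAt ℝ pb x ∧ pb x ≠ 0)
    (hu : ∀ x ∈ Set.Ioo a b, DifferentiableAt ℝ u x)
    (hv : ∀ x ∈ Set.Ioo a b, DifferentiableAt ℝ v x) :
    ∀ X ∈ g '' Set.Ioo a b,
      Wr (fun Y => (p (h Y) : ℂ) * u (h Y)) (fun Y => (p (h Y) : ℂ) * v (h Y)) X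
        = (((p (h X) / pb (h X)) ^ 2 : ℝ) : ℂ)
            * ((deriv (fun t => gb (h t)) X : ℝ) : ℂ)
            * Wr (fun Y => (pb (hb Y) : ℂ) * u (hb Y))
                (fun Y => (pb (hb Y) : ℂ) * v (hb Y)) (gb (h X)) := by
  rintro X ⟨x, hx, rfl⟩
  have hh := inv_hasDerivAt a b g h hg hg' hinv x hx
  have hhb := inv_hasDerivAt a b gb hb hgb hgb' hbinv x hx
  have hd : HasDerivAt gb (deriv gb x) (h (g x)) := by
    rw [hinv x hx]
    exact (differentiableAt_of_deriv_ne_zero (hgb' x hx).ne').hasDerivAt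
  have hc : deriv (fun t => gb (h t)) (g x) = deriv gb x * (deriv g x)⁻¹ :=
    (hd.comp (g x) hh).deriv
  rw [hc, Wr_comp h p u v x (g x) _ (hinv x hx) hh (hp x hx).1 (hu x hx) (hv x hx), hinv x hx,
    Wr_comp hb pb u v x (gb x) _ (hbinv x hx) hhb (hpb x hx).1 (hu x hx) (hv x hx)]
  have e1 : (pb x : ℂ) ≠ 0 := by exact_mod_cast (hpb x hx).2
  have e2 : ((deriv g x : ℝ) : ℂ) ≠ 0 := by exact_mod_cast (hg' x hx).ne'
  have e3 : ((deriv gb x : ℝ) : ℂ) ≠ 0 := by exact_mod_cast (hgb' x hx).ne'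
  push_cast
  field_simp
end

section
/- Let A > 0, let f₁ : (0,A) → (0,∞) be differentiable, and let w, ŵ : (0,A) → (0,∞) be differentiable with √w and √ŵ integrable near 0, so that g_w(x) = ∫₀ˣ √(w(t)) dt and g_ŵ(x) = ∫₀ˣ √(ŵ(t)) dt define strictly increasing C¹ bijections onto intervals (0,A_w) and (0,A_ŵ) with inverses h_w and h_ŵ. For differentiable u, v : (0,A) → ℂ define U_w(X) = ((f₁/w)(h_w(X)))^{−1/4}·u(h_w(X)) and V_w(X) = ((f₁/w)(h_w(X)))^{−1/4}·v(h_w(X)) on (0,A_w), and analogously U_ŵ, V_ŵ on (0,A_ŵ). Then for every x ∈ (0,A): W(U_w,V_w)(g_w(x)) = W(U_ŵ,V_ŵ)(g_ŵ(x)), where W(F,G) = F·G' − F'·G. -/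
open MeasureTheory

theorem wr_aux (A Aw : ℝ) (f1 w : ℝ → ℝ)
    (hf1 : ∀ x ∈ Set.Ioo 0 A, DifferentiableAt ℝ f1 x ∧ 0 < f1 x)
    (hwdiff : ∀ x ∈ Set.Ioo 0 A, DifferentiableAt ℝ w x ∧ 0 < w x)
    (hwint : ∀ x ∈ Set.Ioo 0 A,
      IntervalIntegrable (fun t => Real.sqrt (w t)) volume 0 x)
    (gw ginvw : ℝ → ℝ)
    (hgw : ∀ x ∈ Set.Ioo 0 A, gw x = ∫ t in (0 : ℝ)..x, Real.sqrt (w t))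
    (hgwmono : StrictMonoOn gw (Set.Ioo 0 A))
    (hgwim : gw '' Set.Ioo 0 A = Set.Ioo 0 Aw)
    (hinvw : ∀ x ∈ Set.Ioo 0 A, ginvw (gw x) = x)
    (u v : ℝ → ℂ)
    (hu : ∀ x ∈ Set.Ioo 0 A, DifferentiableAt ℝ u x)
    (hv : ∀ x ∈ Set.Ioo 0 A, DifferentiableAt ℝ v x) (x : ℝ) (hx : x ∈ Set.Ioo 0 A) :
      Wr (fun X => (((f1 (ginvw X) / w (ginvw X)) ^ (-(1 / 4 : ℝ)) : ℝ) : ℂ) * u (ginvw X))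
         (fun X => (((f1 (ginvw X) / w (ginvw X)) ^ (-(1 / 4 : ℝ)) : ℝ) : ℂ) * v (ginvw X))
         (gw x) = (((f1 x) ^ (-(1 / 2 : ℝ)) : ℝ) : ℂ) * Wr u v x := by
  have hnx : Set.Ioo 0 A ∈ nhds x := isOpen_Ioo.mem_nhds hx
  have hgx : gw x ∈ Set.Ioo 0 Aw := hgwim ▸ Set.mem_image_of_mem gw hx
  have hng : Set.Ioo 0 Aw ∈ nhds (gw x) := isOpen_Ioo.mem_nhds hgx
  have hcont : ContinuousOn (fun t => Real.sqrt (w t)) (Set.Ioo 0 A) := fun y hy =>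
    ((hwdiff y hy).1.continuousAt.sqrt).continuousWithinAt
  have hg : HasDerivAt gw (Real.sqrt (w x)) x := by
    have h := intervalIntegral.integral_hasDerivAt_right (hwint x hx)
      (hcont.stronglyMeasurableAtFilter isOpen_Ioo x hx) (hcont.continuousAt hnx)
    refine h.congr_of_eventuallyEq ?_
    filter_upwards [hnx] with y hy using hgw y hy
  have hinvim : ginvw '' Set.Ioo 0 Aw = Set.Ioo 0 A := by
    rw [← hgwim, Set.image_image]
    ext y
    constructor
    · rintro ⟨z, hz, rfl⟩
      simpa [hinvw z hz] using hz
    · intro hy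
      exact ⟨y, hy, hinvw y hy⟩
  have hinvmono : StrictMonoOn ginvw (Set.Ioo 0 Aw) := by
    rw [← hgwim]
    rintro _ ⟨a, ha, rfl⟩ _ ⟨b, hb, rfl⟩ hab
    rw [hinvw a ha, hinvw b hb]
    exact (hgwmono.lt_iff_lt ha hb).1 hab
  have hic : ContinuousAt ginvw (gw x) := by
    apply hinvmono.continuousAt_of_image_mem_nhds hng
    rw [hinvim, hinvw x hx]
    exact hnx
  have hwx := (hwdiff x hx).2
  have hfx := (hf1 x hx).2
  have hsq : 0 < Real.sqrt (w x) := Real.sqrt_pos.2 hwx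
  have hi : HasDerivAt ginvw (Real.sqrt (w x))⁻¹ (gw x) := by
    refine HasDerivAt.of_local_left_inverse hic (by rwa [hinvw x hx]) hsq.ne' ?_
    filter_upwards [hng] with y hy
    rw [← hgwim] at hy
    obtain ⟨z, hz, rfl⟩ := hy
    rw [hinvw z hz]
  have hp : DifferentiableAt ℝ (fun y => (f1 y / w y) ^ (-(1 / 4 : ℝ))) x :=
    ((hf1 x hx).1.div (hwdiff x hx).1 hwx.ne').rpow_const (Or.inl (div_pos hfx hwx).ne')
  have key : ∀ z : ℝ → ℂ, DifferentiableAt ℝ z x →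
      deriv (fun X => (((f1 (ginvw X) / w (ginvw X)) ^ (-(1 / 4 : ℝ)) : ℝ) : ℂ) * z (ginvw X))
        (gw x) = (Real.sqrt (w x))⁻¹ •
        (((deriv (fun y => (f1 y / w y) ^ (-(1 / 4 : ℝ))) x : ℝ) : ℂ) * z x
          + (((f1 x / w x) ^ (-(1 / 4 : ℝ)) : ℝ) : ℂ) * deriv z x) := by
    intro z hz
    have h1 := hp.hasDerivAt.ofReal_comp.mul hz.hasDerivAt
    have h2 : HasDerivAt (fun y => (((f1 y / w y) ^ (-(1 / 4 : ℝ)) : ℝ) : ℂ) * z y)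
      (((deriv (fun y => (f1 y / w y) ^ (-(1 / 4 : ℝ))) x : ℝ) : ℂ) * z x
          + (((f1 x / w x) ^ (-(1 / 4 : ℝ)) : ℝ) : ℂ) * deriv z x)
      (ginvw (gw x)) := by
      rw [hinvw x hx]; exact h1
    exact (h2.scomp (gw x) hi).deriv
  have hpk : ((f1 x / w x) ^ (-(1 / 4 : ℝ))) * ((f1 x / w x) ^ (-(1 / 4 : ℝ)))
      * (Real.sqrt (w x))⁻¹ = (f1 x) ^ (-(1 / 2 : ℝ)) := by
    rw [← Real.rpow_add (div_pos hfx hwx), Real.div_rpow hfx.le hwx.le, Real.sqrt_eq_rpow,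
      ← Real.rpow_neg hwx.le]
    norm_num
    have := (Real.rpow_pos_of_pos hwx (-(1/2:ℝ))).ne'
    field_simp
  unfold Wr
  rw [key u (hu x hx), key v (hv x hx), ← hpk]
  simp only [hinvw x hx, Complex.real_smul]
  push_cast
  ring

/-- **Corollary 2.5.** The Wronskians of the transformed solutions of the radial Stäckel
equation do not depend on the positive weight `w` used in the Liouville change of
variables `X = ∫₀ˣ √w`, with weight function `(f₁/w)^{−1/4}`. -/
theorem stmt12 (A Aw Awb : ℝ) (hA : 0 < A) (hAw : 0 < Aw) (hAwb : 0 < Awb)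
    (f1 w wb : ℝ → ℝ)
    (hf1 : ∀ x ∈ Set.Ioo 0 A, DifferentiableAt ℝ f1 x ∧ 0 < f1 x)
    (hwdiff : ∀ x ∈ Set.Ioo 0 A, DifferentiableAt ℝ w x ∧ 0 < w x)
    (hwbdiff : ∀ x ∈ Set.Ioo 0 A, DifferentiableAt ℝ wb x ∧ 0 < wb x)
    (hwint : ∀ x ∈ Set.Ioo 0 A,
      IntervalIntegrable (fun t => Real.sqrt (w t)) volume 0 x)
    (hwbint : ∀ x ∈ Set.Ioo 0 A,
      IntervalIntegrable (fun t => Real.sqrt (wb t)) volume 0 x)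
    (gw gwb ginvw ginvwb : ℝ → ℝ)
    (hgw : ∀ x ∈ Set.Ioo 0 A, gw x = ∫ t in (0 : ℝ)..x, Real.sqrt (w t))
    (hgwb : ∀ x ∈ Set.Ioo 0 A, gwb x = ∫ t in (0 : ℝ)..x, Real.sqrt (wb t))
    (hgwmono : StrictMonoOn gw (Set.Ioo 0 A)) (hgwbmono : StrictMonoOn gwb (Set.Ioo 0 A))
    (hgwim : gw '' Set.Ioo 0 A = Set.Ioo 0 Aw)
    (hgwbim : gwb '' Set.Ioo 0 A = Set.Ioo 0 Awb)
    (hinvw : ∀ x ∈ Set.Ioo 0 A, ginvw (gw x) = x)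
    (hinvwb : ∀ x ∈ Set.Ioo 0 A, ginvwb (gwb x) = x)
    (u v : ℝ → ℂ)
    (hu : ∀ x ∈ Set.Ioo 0 A, DifferentiableAt ℝ u x)
    (hv : ∀ x ∈ Set.Ioo 0 A, DifferentiableAt ℝ v x) :
    ∀ x ∈ Set.Ioo 0 A,
      Wr (fun X => (((f1 (ginvw X) / w (ginvw X)) ^ (-(1 / 4 : ℝ)) : ℝ) : ℂ) * u (ginvw X))
         (fun X => (((f1 (ginvw X) / w (ginvw X)) ^ (-(1 / 4 : ℝ)) : ℝ) : ℂ) * v (ginvw X))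
         (gw x)
      = Wr (fun X => (((f1 (ginvwb X) / wb (ginvwb X)) ^ (-(1 / 4 : ℝ)) : ℝ) : ℂ) * u (ginvwb X))
           (fun X => (((f1 (ginvwb X) / wb (ginvwb X)) ^ (-(1 / 4 : ℝ)) : ℝ) : ℂ) * v (ginvwb X))
           (gwb x) := by
  intro x hx
  rw [wr_aux A Aw f1 w hf1 hwdiff hwint gw ginvw hgw hgwmono hgwim hinvw u v hu hv x hx,
    wr_aux A Awb f1 wb hf1 hwbdiff hwbint gwb ginvwb hgwb hgwbmono hgwbim hinvwb u v hu hv x hx]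
end

section
/- Let A > 0, ε₀ > 0, B, C > 0. Let s_{21}, s_{22}, s_{23} : ℝ → ℝ be continuous B-periodic and s_{31}, s_{32}, s_{33} : ℝ → ℝ continuous C-periodic, with s_{23} − s_{22} = 1, s_{32} − s_{33} = 1, and s^{11}(x²,x³) = s_{22}(x²)s_{33}(x³) − s_{23}(x²)s_{32}(x³) > 0 for all (x²,x³). Let s_{11}, s_{12}, s_{13} : (0,A) → ℝ and suppose there exists K > 0 such that for all x ∈ (0,A/2): |x²·s_{11}(x) − 1| ≤ K(1+|log x|)^{−1−ε₀}, |s_{12}(x) − 1| ≤ K(1+|log x|)^{−1−ε₀}, and |s_{13}(x) − 1| ≤ K(1+|log x|)^{−1−ε₀}. Define s^{21} = s_{13}s_{32} − s_{12}s_{33}, s^{31} = s_{12}s_{23} − s_{13}s_{22}, det S = s_{11}s^{11} + s_{21}s^{21} + s_{31}s^{31} (functions of (x¹,x²,x³)), and assume there exists f₁ : (0,A) → ℝ such that s^{11}·s^{21}·s^{31} = f₁(x¹)·det S identically (Robertson condition). Then there exist K' > 0 and x₀ ∈ (0,A) such that for all x ∈ (0,x₀): |f₁(x)/s_{12}(x)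 − x²| ≤ K'·x²·(1+|log x|)^{−1−ε₀}; in particular (f₁/s_{12})^{1/4}(x) = √x·(1 + O((1+|log x|)^{−1−ε₀})) as x → 0. -/
open Filter Topology Asymptotics in
lemma sq_isBigO_logweight (ε₀ : ℝ) (hε : 0 < ε₀) :
    (fun x : ℝ => x ^ 2) =O[𝓝[>] 0] (fun x : ℝ => (1 + |Real.log x|) ^ (-(1 + ε₀))) := by
  have h := isLittleO_abs_log_rpow_rpow_nhdsGT_zero (1 + ε₀) (show (-2 : ℝ) < 0 by norm_num)
  have h1 := h.bound (show (0 : ℝ) < 1 by norm_num)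
  refine IsBigO.of_bound ((2 : ℝ) ^ (1 + ε₀)) ?_
  have h2 : ∀ᶠ x : ℝ in 𝓝[>] 0, Real.log x < -1 :=
    Real.tendsto_log_nhdsGT_zero.eventually_lt_atBot (-1)
  filter_upwards [h1, h2, self_mem_nhdsWithin] with x hx hl hx0
  have hx0 : 0 < x := hx0
  have ha : 1 ≤ |Real.log x| := by rw [abs_of_neg (by linarith)]; linarith
  have hw : 0 < 1 + |Real.log x| := by positivity
  have hwp : 0 < (1 + |Real.log x|) ^ (1 + ε₀) := Real.rpow_pos_of_pos hw _
  rw [Real.norm_of_nonneg (by positivity), Real.norm_of_nonneg (by positivity), one_mul,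
    Real.rpow_neg hx0.le, Real.rpow_two] at hx
  rw [Real.norm_of_nonneg (by positivity), Real.norm_of_nonneg (by positivity),
    Real.rpow_neg hw.le, ← div_eq_mul_inv, le_div_iff₀ hwp]
  have h3 : (1 + |Real.log x|) ^ (1 + ε₀) ≤ (2 * |Real.log x|) ^ (1 + ε₀) :=
    Real.rpow_le_rpow hw.le (by linarith) (by linarith)
  rw [Real.mul_rpow (by norm_num) (by positivity)] at h3
  have h4 : (0 : ℝ) < 2 ^ (1 + ε₀) := by positivity
  calc x ^ 2 * (1 + |Real.log x|) ^ (1 + ε₀)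
      ≤ x ^ 2 * (2 ^ (1 + ε₀) * (x ^ 2)⁻¹) := by
        gcongr
        exact h3.trans (by gcongr)
    _ = 2 ^ (1 + ε₀) := by field_simp

open Filter Topology Asymptotics in
lemma logweight_tendsto (ε₀ : ℝ) (hε : 0 < ε₀) :
    Tendsto (fun x : ℝ => (1 + |Real.log x|) ^ (-(1 + ε₀))) (𝓝[>] 0) (𝓝 0) := by
  have h1 : Tendsto (fun x : ℝ => 1 + |Real.log x|) (𝓝[>] 0) atTop :=
    tendsto_atTop_add_const_left _ _ (tendsto_abs_atBot_atTop.comp Real.tendsto_log_nhdsGT_zero)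
  exact (tendsto_rpow_neg_atTop (by linarith : 0 < 1 + ε₀)).comp h1

open Filter Topology Asymptotics in
lemma core_bound (e a b c f : ℝ → ℝ) (d s21 s22 s23 s31 s32 s33 : ℝ) (hd : 0 < d)
    (g2 : s23 - s22 = 1) (g3 : s32 - s33 = 1)
    (he : Tendsto e (𝓝[>] 0) (𝓝 0)) (hsq : (fun x : ℝ => x ^ 2) =O[𝓝[>] 0] e)
    (ha : (fun x => x ^ 2 * a x - 1) =O[𝓝[>] 0] e)
    (hb : (fun x => b x - 1) =O[𝓝[>] 0] e)
    (hc : (fun x => c x - 1) =O[𝓝[>] 0] e)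
    (hR : ∀ᶠ x in 𝓝[>] 0, d * (c x * s32 - b x * s33) * (b x * s23 - c x * s22)
      = f x * (a x * d + s21 * (c x * s32 - b x * s33) + s31 * (b x * s23 - c x * s22))) :
    (fun x => f x / b x - x ^ 2) =O[𝓝[>] 0] (fun x => x ^ 2 * e x) := by
  set p : ℝ → ℝ := fun x => c x * s32 - b x * s33 with hp
  set q : ℝ → ℝ := fun x => b x * s23 - c x * s22 with hq
  have hp1 : (fun x => p x - 1) =O[𝓝[>] 0] e := by
    refine ((hc.const_mul_left s32).sub (hb.const_mul_left s33)).congr_left fun x => ?_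
    simp only [hp]; linear_combination -g3
  have hq1 : (fun x => q x - 1) =O[𝓝[>] 0] e := by
    refine ((hb.const_mul_left s23).sub (hc.const_mul_left s22)).congr_left fun x => ?_
    simp only [hq]; linear_combination -g2
  have lim : ∀ (u : ℝ → ℝ) (l : ℝ), (fun x => u x - l) =O[𝓝[>] 0] e →
      Tendsto u (𝓝[>] 0) (𝓝 l) := fun u l h => by
    simpa using (h.trans_tendsto he).add_const l
  have hpO := (lim _ _ hp1).isBigO_one ℝ
  have hqO := (lim _ _ hq1).isBigO_one ℝ
  have hbO := (lim _ _ hb).isBigO_one ℝ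
  set D : ℝ → ℝ := fun x => x ^ 2 * (a x * d + s21 * p x + s31 * q x) with hD
  have hD1 : (fun x => D x - d) =O[𝓝[>] 0] e := by
    have h := hsq.mul ((hpO.const_mul_left s21).add (hqO.const_mul_left s31))
    simp only [mul_one] at h
    refine ((ha.const_mul_left d).add h).congr_left fun x => ?_
    simp only [hD]; ring
  have hN : (fun x => d * p x * q x - D x * b x) =O[𝓝[>] 0] e := by
    have h1 := (hp1.mul hqO).const_mul_left d
    have h2 := hD1.mul hbO
    simp only [mul_one] at h1 h2
    refine (((h1.add (hq1.const_mul_left d)).sub h2).sub (hb.const_mul_left d)).congr_left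
      fun x => ?_
    ring
  have hDb : Tendsto (fun x => D x * b x) (𝓝[>] 0) (𝓝 d) := by
    simpa using (lim _ _ hD1).mul (lim _ _ hb)
  have hinv := (hDb.inv₀ hd.ne').isBigO_one ℝ
  have hfin := (isBigO_refl (fun x : ℝ => x ^ 2) (𝓝[>] 0)).mul (hN.mul hinv)
  simp only [mul_one] at hfin
  refine hfin.congr' ?_ EventuallyEq.rfl
  filter_upwards [hR, hDb.eventually_ne hd.ne'] with x hx hne
  have hD0 : D x ≠ 0 := left_ne_zero_of_mul hne
  have hb0 : b x ≠ 0 := right_ne_zero_of_mul hne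
  have hx' : d * p x * q x * x ^ 2 = f x * D x := by
    simp only [hD]; linear_combination x ^ 2 * hx
  field_simp
  linear_combination hx'

/-- **Lemma 2.8.** Under the asymptotically hyperbolic structure at the end `{x¹ = 0}` of a
Stäckel manifold in the gauge `s₂₃ − s₂₂ = 1`, `s₃₂ − s₃₃ = 1`, the Robertson function `f₁`
satisfies `f₁/s₁₂ = x²·(1 + O((1+|log x|)^{−1−ε₀}))` as `x → 0`. -/
theorem stmt13 (A ε₀ B C : ℝ) (hA : 0 < A) (hε : 0 < ε₀) (hB : 0 < B) (hC : 0 < C)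
    (s21 s22 s23 s31 s32 s33 : ℝ → ℝ)
    (hc21 : Continuous s21) (hc22 : Continuous s22) (hc23 : Continuous s23)
    (hc31 : Continuous s31) (hc32 : Continuous s32) (hc33 : Continuous s33)
    (hp21 : Function.Periodic s21 B) (hp22 : Function.Periodic s22 B)
    (hp23 : Function.Periodic s23 B)
    (hp31 : Function.Periodic s31 C) (hp32 : Function.Periodic s32 C)
    (hp33 : Function.Periodic s33 C)
    (hgauge2 : ∀ x, s23 x - s22 x = 1) (hgauge3 : ∀ x, s32 x - s33 x = 1)
    (hm11 : ∀ x2 x3 : ℝ, 0 < s22 x2 * s33 x3 - s23 x2 * s32 x3)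
    (s11 s12 s13 : ℝ → ℝ) (K : ℝ) (hK : 0 < K)
    (hb11 : ∀ x ∈ Set.Ioo 0 (A / 2),
      |x ^ 2 * s11 x - 1| ≤ K * (1 + |Real.log x|) ^ (-(1 + ε₀)))
    (hb12 : ∀ x ∈ Set.Ioo 0 (A / 2),
      |s12 x - 1| ≤ K * (1 + |Real.log x|) ^ (-(1 + ε₀)))
    (hb13 : ∀ x ∈ Set.Ioo 0 (A / 2),
      |s13 x - 1| ≤ K * (1 + |Real.log x|) ^ (-(1 + ε₀)))
    (f1 : ℝ → ℝ)
    (hRob : ∀ x1 ∈ Set.Ioo 0 A, ∀ x2 x3 : ℝ,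
      (s22 x2 * s33 x3 - s23 x2 * s32 x3) * (s13 x1 * s32 x3 - s12 x1 * s33 x3)
          * (s12 x1 * s23 x2 - s13 x1 * s22 x2)
        = f1 x1 * (s11 x1 * (s22 x2 * s33 x3 - s23 x2 * s32 x3)
            + s21 x2 * (s13 x1 * s32 x3 - s12 x1 * s33 x3)
            + s31 x3 * (s12 x1 * s23 x2 - s13 x1 * s22 x2))) :
    ∃ K' > 0, ∃ x₀ ∈ Set.Ioo 0 A, ∀ x ∈ Set.Ioo 0 x₀,
      |f1 x / s12 x - x ^ 2| ≤ K' * x ^ 2 * (1 + |Real.log x|) ^ (-(1 + ε₀)) := by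
  have he := logweight_tendsto ε₀ hε
  have hmem : Set.Ioo 0 (A / 2) ∈ nhdsWithin (0 : ℝ) (Set.Ioi 0) :=
    Ioo_mem_nhdsGT (by linarith)
  have hO : ∀ u : ℝ → ℝ, (∀ x ∈ Set.Ioo 0 (A / 2),
      |u x| ≤ K * (1 + |Real.log x|) ^ (-(1 + ε₀))) →
      Asymptotics.IsBigO (nhdsWithin (0 : ℝ) (Set.Ioi 0)) u
        (fun x => (1 + |Real.log x|) ^ (-(1 + ε₀))) := fun u hu => by
    refine Asymptotics.IsBigO.of_bound K ?_
    filter_upwards [hmem] with x hx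
    rw [Real.norm_eq_abs, Real.norm_of_nonneg (by positivity)]
    exact hu x hx
  have hmain := core_bound _ s11 s12 s13 f1 _ (s21 0) (s22 0) (s23 0) (s31 0) (s32 0) (s33 0)
    (hm11 0 0) (hgauge2 0) (hgauge3 0) he (sq_isBigO_logweight ε₀ hε)
    (hO _ hb11) (hO _ hb12) (hO _ hb13) (by
      filter_upwards [Ioo_mem_nhdsGT hA] with x hx
      exact hRob x hx 0 0)
  obtain ⟨M, hM, hb⟩ := hmain.exists_pos
  have hev := hb.bound
  obtain ⟨r, hr, hrs⟩ := (mem_nhdsGT_iff_exists_Ioo_subset).1 hev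
  have hr : 0 < r := hr
  refine ⟨M, hM, min r (A / 2), ⟨by positivity, ?_⟩, fun x hx => ?_⟩
  · exact lt_of_le_of_lt (min_le_right _ _) (by linarith)
  · have h := hrs ⟨hx.1, lt_of_lt_of_le hx.2 (min_le_left _ _)⟩
    simp only [Set.mem_setOf_eq] at h
    rw [Real.norm_eq_abs, Real.norm_of_nonneg (by positivity), ← mul_assoc] at h
    exact h
end

section
/- For every ε > 0 and every X₀ ∈ (0,1) there exists a constant C > 0 such that for all r ≥ e: ∫₀^{X₀} 1/( t·(1+|log t|)^{1+ε}·(1+r·t) ) dt ≤ C·(log r)^{−ε}. -/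
open MeasureTheory

open Filter Topology Set in
lemma aux_int (ε : ℝ) (hε : 0 < ε) (s : ℝ) (hs : 0 < s) (hs1 : s ≤ 1) :
    IntegrableOn (fun t : ℝ => 1 / (t * (1 - Real.log t) ^ (1 + ε))) (Ioc 0 s) ∧
    ∫ t in Ioc 0 s, 1 / (t * (1 - Real.log t) ^ (1 + ε)) = (1 - Real.log s) ^ (-ε) / ε := by
  set G : ℝ → ℝ := Function.update (fun t => (1 - Real.log t) ^ (-ε) / ε) 0 0 with hG
  have hpos : ∀ t ∈ Ioc 0 s, 0 < 1 - Real.log t := by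
    intro t ht
    have := Real.log_nonpos ht.1.le (ht.2.trans hs1)
    linarith
  have hcont : ContinuousOn G (Icc 0 s) := by
    rw [hG, continuousOn_update_iff]
    constructor
    · intro t ht
      have h0 : t ≠ 0 := fun h => ht.2 (by simpa using h)
      have ht' : t ∈ Ioc 0 s := ⟨lt_of_le_of_ne ht.1.1 (Ne.symm h0), ht.1.2⟩
      apply ContinuousAt.continuousWithinAt
      apply ContinuousAt.div_const
      apply ContinuousAt.rpow_const
      · exact continuousAt_const.sub (Real.continuousAt_log h0)
      · left; exact (hpos t ht').ne'
    · intro _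
      have h1 : Tendsto (fun t : ℝ => 1 - Real.log t) (𝓝[>] 0) atTop := by
        simpa [sub_eq_add_neg] using tendsto_atTop_add_const_left _ (1:ℝ)
          (tendsto_neg_atBot_atTop.comp Real.tendsto_log_nhdsGT_zero)
      have h2 := ((tendsto_rpow_neg_atTop hε).comp h1).div_const ε
      rw [zero_div] at h2
      refine h2.mono_left (nhdsWithin_mono _ ?_)
      intro t ht
      exact lt_of_le_of_ne ht.1.1 (fun h => ht.2 (by simp [← h]))
  have hder : ∀ t ∈ Ioo 0 s, HasDerivAt G (1 / (t * (1 - Real.log t) ^ (1 + ε))) t := by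
    intro t ht
    have hp := hpos t ⟨ht.1, ht.2.le⟩
    have h1 : HasDerivAt (fun t => (1 - Real.log t) ^ (-ε) / ε)
        (1 / (t * (1 - Real.log t) ^ (1 + ε))) t := by
      have := ((((Real.hasDerivAt_log ht.1.ne').const_sub 1).rpow_const (p := -ε)
        (Or.inl hp.ne')).div_const ε)
      refine this.congr_deriv ?_
      rw [show -ε - 1 = -(1 + ε) by ring, Real.rpow_neg hp.le]
      have := (Real.rpow_pos_of_pos hp (1 + ε)).ne'
      have := ht.1.ne'
      field_simp
    refine h1.congr_of_eventuallyEq ?_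
    filter_upwards [isOpen_ne.mem_nhds ht.1.ne'] with x hx
    simp [hG, Function.update_of_ne hx]
  have hint : IntegrableOn (fun t : ℝ => 1 / (t * (1 - Real.log t) ^ (1 + ε))) (Ioc 0 s) := by
    refine intervalIntegral.integrableOn_deriv_of_nonneg hcont hder ?_
    intro t ht
    have hp := hpos t ⟨ht.1, ht.2.le⟩
    have := ht.1
    positivity
  refine ⟨hint, ?_⟩
  rw [← intervalIntegral.integral_of_le hs.le,
    intervalIntegral.integral_eq_sub_of_hasDerivAt_of_le hs.le hcont hder
      ((intervalIntegrable_iff_integrableOn_Ioc_of_le hs.le).2 hint)]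
  simp [hG, Function.update_of_ne hs.ne']

/-- **The integral estimate (4.2) of Step 1 of the proof of Lemma 4.3.** For every `ε > 0`
and `X₀ ∈ (0,1)` there is `C > 0` such that for all `r ≥ e`,
`∫₀^{X₀} dt/(t·(1+|log t|)^{1+ε}·(1+rt)) ≤ C·(log r)^{−ε}`. -/
theorem stmt15 (ε : ℝ) (hε : 0 < ε) (X₀ : ℝ) (hX₀ : X₀ ∈ Set.Ioo (0 : ℝ) 1) :
    ∃ C > 0, ∀ r : ℝ, Real.exp 1 ≤ r →
      (∫ t in (0 : ℝ)..X₀,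
          1 / (t * (1 + |Real.log t|) ^ (1 + ε) * (1 + r * t)))
        ≤ C * Real.log r ^ (-ε) := by
  refine ⟨3 ^ ε / ε + (3 * ε) ^ ε, by positivity, ?_⟩
  intro r hr
  have hr0 : 0 < r := (Real.exp_pos 1).trans_le hr
  have hL : 1 ≤ Real.log r := (Real.le_log_iff_exp_le hr0).2 hr
  have hL0 : 0 < Real.log r := by linarith
  set s : ℝ := Real.exp (-(Real.log r / 3)) with hs
  have hs0 : 0 < s := Real.exp_pos _
  have hs1 : s ≤ 1 := by rw [hs, Real.exp_le_one_iff]; linarith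
  have hrs : r * s ^ 3 = 1 := by
    rw [hs, ← Real.exp_nat_mul]
    nth_rw 1 [← Real.exp_log hr0]
    rw [← Real.exp_add]
    simp; ring
  obtain ⟨hi, hv⟩ := aux_int ε hε s hs0 hs1
  set f1 : ℝ → ℝ := fun t => 1 / (t * (1 - Real.log t) ^ (1 + ε)) with hf1
  have hf1nn : ∀ t, 0 ≤ (Set.Ioc 0 s).indicator f1 t := by
    intro t
    apply Set.indicator_nonneg
    intro t ht
    have := Real.log_nonpos ht.1.le (ht.2.trans hs1)
    have h1 : 0 < 1 - Real.log t := by linarith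
    have := ht.1
    simp only [hf1]; positivity
  have hind : IntegrableOn ((Set.Ioc 0 s).indicator f1) (Set.Ioc 0 1) :=
    ((integrable_indicator_iff measurableSet_Ioc).2 hi).integrableOn
  have hconst : IntegrableOn (fun _ : ℝ => s) (Set.Ioc 0 1) := by simp
  have hg : IntegrableOn (fun t => (Set.Ioc 0 s).indicator f1 t + s) (Set.Ioc 0 1) :=
    hind.add hconst
  have hsub : Set.Ioc 0 X₀ ⊆ Set.Ioc (0:ℝ) 1 := Set.Ioc_subset_Ioc_right hX₀.2.le
  rw [intervalIntegral.integral_of_le hX₀.1.le]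
  calc _ ≤ ∫ t in Set.Ioc 0 X₀, ((Set.Ioc 0 s).indicator f1 t + s) := by
        apply integral_mono_of_nonneg
        · filter_upwards [ae_restrict_mem measurableSet_Ioc] with t ht
          have := ht.1
          simp only [Pi.zero_apply]; positivity
        · exact hg.mono_set hsub
        · filter_upwards [ae_restrict_mem measurableSet_Ioc] with t ht
          have ht0 := ht.1
          have hl := Real.log_nonpos ht.1.le (ht.2.trans hX₀.2.le)
          have habs : 1 + |Real.log t| = 1 - Real.log t := by rw [abs_of_nonpos hl]; ring
          rw [habs]
          have hp : 0 < 1 - Real.log t := by linarith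
          have hge : 1 ≤ (1 - Real.log t) ^ (1 + ε) :=
            Real.one_le_rpow (by linarith) (by linarith)
          by_cases hts : t ≤ s
          · rw [Set.indicator_of_mem (show t ∈ Set.Ioc 0 s from ⟨ht0, hts⟩)]
            have : 1 / (t * (1 - Real.log t) ^ (1 + ε) * (1 + r * t)) ≤ f1 t := by
              simp only [hf1]
              apply one_div_le_one_div_of_le (by positivity)
              apply le_mul_of_one_le_right (by positivity)
              have : 0 < r * t := by positivity
              linarith
            linarith
          · push Not at hts
            have h0 := hf1nn t
            have : 1 / (t * (1 - Real.log t) ^ (1 + ε) * (1 + r * t)) ≤ s := by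
              rw [div_le_iff₀ (by positivity)]
              calc 1 = s * (s * 1 * (r * s)) := by linarith
                _ ≤ s * (t * (1 - Real.log t) ^ (1 + ε) * (1 + r * t)) := by
                  have : r * s ≤ 1 + r * t := by nlinarith
                  gcongr
            linarith
    _ ≤ ∫ t in Set.Ioc 0 1, ((Set.Ioc 0 s).indicator f1 t + s) := by
        apply setIntegral_mono_set hg
        · exact Filter.Eventually.of_forall fun t => add_nonneg (hf1nn t) hs0.le
        · exact hsub.eventuallyLE
    _ = (1 - Real.log s) ^ (-ε) / ε + s := by
        rw [integral_add hind hconst, setIntegral_indicator measurableSet_Ioc,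
          Set.inter_eq_right.2 (Set.Ioc_subset_Ioc_right hs1), hv]
        simp
    _ ≤ _ := by
        rw [add_mul]
        have hLe : 0 < Real.log r ^ ε := by positivity
        apply add_le_add
        · rw [div_mul_eq_mul_div]
          gcongr
          have : (3:ℝ) ^ ε * Real.log r ^ (-ε) = (Real.log r / 3) ^ (-ε) := by
            rw [Real.div_rpow hL0.le (by norm_num), Real.rpow_neg (by norm_num : (0:ℝ) ≤ 3)]
            field_simp
          rw [this, hs, Real.log_exp]
          apply Real.rpow_le_rpow_of_nonpos (by positivity) (by linarith) (by linarith)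
        · have h1 : Real.log r ≤ (3 * ε) * Real.exp (Real.log r / (3 * ε)) := by
            have := Real.add_one_le_exp (Real.log r / (3 * ε))
            calc Real.log r = (3 * ε) * (Real.log r / (3 * ε)) := by field_simp
              _ ≤ _ := by gcongr; linarith
          have h2 : Real.log r ^ ε ≤ (3 * ε) ^ ε * Real.exp (Real.log r / 3) := by
            calc _ ≤ ((3 * ε) * Real.exp (Real.log r / (3 * ε))) ^ ε := by gcongr
              _ = _ := by
                rw [Real.mul_rpow (by positivity) (by positivity), ← Real.exp_mul]
                congr 2
                field_simp
          rw [Real.rpow_neg hL0.le, ← div_eq_mul_inv, le_div_iff₀ hLe, hs, Real.exp_neg,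
            inv_mul_le_iff₀ (Real.exp_pos _)]
          linarith
end

section
/- Let 0 < α₁ < α₂ and 0 < e₁ ≤ e₂. Let G : [α₁², α₂²] → (0,∞) be differentiable with e₁ ≤ G'(s) ≤ e₂ for all s ∈ [α₁², α₂²]. For m ∈ ℕ and θ ∈ [α₁, α₂] set μ_m(θ) = 2·m·π·G(θ²). Then there exist δ > 0 and M ∈ ℕ such that for all m ≥ M and all θ₁, θ₂ ∈ [α₁, α₂]: |μ_{m+1}(θ₂) − μ_m(θ₁)| + |θ₂·μ_{m+1}(θ₂) − θ₁·μ_m(θ₁)| ≥ δ. -/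
/-- **Uniform separation of the approximate eigenvalue curves** (Appendix B, proof of
Lemma 4.5). If `G` is differentiable on `[α₁², α₂²]` with `e₁ ≤ G' ≤ e₂`, `G > 0`, and
`μ_m(θ) = 2mπ·G(θ²)`, then the points `(μ_m(θ), θ·μ_m(θ))` on consecutive curves are
uniformly separated for large `m`. -/
theorem stmt16 (α₁ α₂ e₁ e₂ : ℝ) (hα₁ : 0 < α₁) (hα : α₁ < α₂) (he₁ : 0 < e₁)
    (he : e₁ ≤ e₂) (G : ℝ → ℝ)
    (hGpos : ∀ s ∈ Set.Icc (α₁ ^ 2) (α₂ ^ 2), 0 < G s)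
    (hGd : ∀ s ∈ Set.Icc (α₁ ^ 2) (α₂ ^ 2),
      DifferentiableAt ℝ G s ∧ e₁ ≤ deriv G s ∧ deriv G s ≤ e₂) :
    ∃ δ > 0, ∃ M : ℕ, ∀ m : ℕ, M ≤ m →
      ∀ θ₁ ∈ Set.Icc α₁ α₂, ∀ θ₂ ∈ Set.Icc α₁ α₂,
        δ ≤ |2 * ((m : ℝ) + 1) * Real.pi * G (θ₂ ^ 2)
              - 2 * (m : ℝ) * Real.pi * G (θ₁ ^ 2)|
          + |θ₂ * (2 * ((m : ℝ) + 1) * Real.pi * G (θ₂ ^ 2))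
              - θ₁ * (2 * (m : ℝ) * Real.pi * G (θ₁ ^ 2))| := by
  have hI : Convex ℝ (Set.Icc (α₁ ^ 2) (α₂ ^ 2)) := convex_Icc _ _
  have hα₂ : 0 < α₂ := hα₁.trans hα
  have he₂ : 0 < e₂ := he₁.trans_le he
  have hmono : MonotoneOn G (Set.Icc (α₁ ^ 2) (α₂ ^ 2)) := by
    apply monotoneOn_of_deriv_nonneg hI
    · intro s hs
      exact (hGd s hs).1.continuousAt.continuousWithinAt
    · intro s hs
      exact (hGd s (interior_subset hs)).1.differentiableWithinAt
    · intro s hs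
      exact he₁.le.trans (hGd s (interior_subset hs)).2.1
  have hsq : ∀ θ ∈ Set.Icc α₁ α₂, θ ^ 2 ∈ Set.Icc (α₁ ^ 2) (α₂ ^ 2) := by
    intro θ hθ
    exact ⟨pow_le_pow_left₀ hα₁.le hθ.1 2, pow_le_pow_left₀ (hα₁.le.trans hθ.1) hθ.2 2⟩
  have h0 := hsq α₁ ⟨le_rfl, hα.le⟩
  have hg : 0 < G (α₁ ^ 2) := hGpos _ h0
  have hlow : ∀ θ ∈ Set.Icc α₁ α₂, G (α₁ ^ 2) ≤ G (θ ^ 2) := fun θ hθ =>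
    hmono h0 (hsq θ hθ) (hsq θ hθ).1
  have hlip : ∀ θ₁ ∈ Set.Icc α₁ α₂, ∀ θ₂ ∈ Set.Icc α₁ α₂,
      |G (θ₂ ^ 2) - G (θ₁ ^ 2)| ≤ 2 * α₂ * e₂ * |θ₂ - θ₁| := by
    intro θ₁ h₁ θ₂ h₂
    have h := hI.norm_image_sub_le_of_norm_deriv_le (f := G) (C := e₂)
      (fun s hs => (hGd s hs).1)
      (fun s hs => by
        rw [Real.norm_eq_abs, abs_of_nonneg (he₁.le.trans (hGd s hs).2.1)]
        exact (hGd s hs).2.2) (hsq θ₁ h₁) (hsq θ₂ h₂)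
    rw [Real.norm_eq_abs, Real.norm_eq_abs] at h
    have h3 : |θ₂ ^ 2 - θ₁ ^ 2| = (θ₂ + θ₁) * |θ₂ - θ₁| := by
      rw [sq_sub_sq, abs_mul, abs_of_nonneg (by linarith [h₁.1, h₂.1])]
    rw [h3] at h
    have h4 : (θ₂ + θ₁) * |θ₂ - θ₁| ≤ (2 * α₂) * |θ₂ - θ₁| :=
      mul_le_mul_of_nonneg_right (by linarith [h₁.2, h₂.2]) (abs_nonneg _)
    have h5 := mul_le_mul_of_nonneg_left h4 he₂.le
    linarith
  have hpi := Real.pi_pos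
  set g := G (α₁ ^ 2) with hgdef
  refine ⟨2 * Real.pi * g ^ 2 / (g + 2 * α₂ * e₂ * (1 + α₂)), by positivity, 0, ?_⟩
  intro m _ θ₁ h₁ θ₂ h₂
  have hm : (0 : ℝ) ≤ m := Nat.cast_nonneg m
  have hG1 := hlow θ₁ h₁
  have hG2 := hlow θ₂ h₂
  have hL := hlip θ₁ h₁ θ₂ h₂
  generalize G (θ₁ ^ 2) = a at *
  generalize G (θ₂ ^ 2) = b at *
  generalize (m : ℝ) = n at *
  set X := 2 * (n + 1) * Real.pi * b - 2 * n * Real.pi * a with hX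
  set Y := θ₂ * (2 * (n + 1) * Real.pi * b) - θ₁ * (2 * n * Real.pi * a) with hY
  have hD : |θ₂ - θ₁| * (2 * n * Real.pi * a) ≤ |Y| + α₂ * |X| := by
    have e : (θ₂ - θ₁) * (2 * n * Real.pi * a) = Y - θ₂ * X := by rw [hX, hY]; ring
    have ha : 0 ≤ 2 * n * Real.pi * a := by
      have : 0 ≤ a := hg.le.trans hG1
      positivity
    rw [← abs_of_nonneg ha, ← abs_mul, e]
    refine (abs_sub _ _).trans ?_
    rw [abs_mul, abs_of_nonneg (hα₁.le.trans h₂.1)]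
    have := mul_le_mul_of_nonneg_right h₂.2 (abs_nonneg X)
    linarith
  have hD2 : |θ₂ - θ₁| * (2 * n * Real.pi * g) ≤ (1 + α₂) * (|X| + |Y|) := by
    have : |θ₂ - θ₁| * (2 * n * Real.pi * g) ≤ |θ₂ - θ₁| * (2 * n * Real.pi * a) := by
      gcongr
    nlinarith [abs_nonneg X, abs_nonneg Y, mul_nonneg hα₂.le (abs_nonneg Y)]
  have hE : 2 * Real.pi * g ≤ |X| + 2 * n * Real.pi * (2 * α₂ * e₂ * |θ₂ - θ₁|) := by
    have e : 2 * Real.pi * b = X - 2 * n * Real.pi * (b - a) := by rw [hX]; ring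
    have k1 : 2 * n * Real.pi * (-(b - a)) ≤ 2 * n * Real.pi * (2 * α₂ * e₂ * |θ₂ - θ₁|) :=
      mul_le_mul_of_nonneg_left ((neg_le_abs _).trans hL) (by positivity)
    have k2 : 2 * Real.pi * g ≤ 2 * Real.pi * b := by gcongr
    linarith [le_abs_self X]
  rw [div_le_iff₀ (by positivity)]
  have f1 := mul_le_mul_of_nonneg_left hE hg.le
  have f2 := mul_le_mul_of_nonneg_left hD2 (show 0 ≤ 2 * α₂ * e₂ by positivity)
  have f3 := mul_nonneg hg.le (abs_nonneg Y)
  linarith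
end

section
/- Let s_{22} : ℝ → ℝ and s_{33} : ℝ → ℝ be C¹ with −1 < s_{22}(x²) < 0 and −1 < s_{33}(x³) < 0 for all x², x³; set s_{23} = 1 + s_{22} and s_{32} = 1 + s_{33}, and assume s^{11}(x²,x³) = s_{22}(x²)s_{33}(x³) − s_{23}(x²)s_{32}(x³) > 0 everywhere. Define p = (p₁, p₂) : ℝ² × (ℝ² ∖ {0}) → ℝ² by p₁(x²,x³,ξ₂,ξ₃) = sqrt( ( −s_{33}(x³)·ξ₂² + s_{23}(x²)·ξ₃² ) / s^{11}(x²,x³) ) and p₂(x²,x³,ξ₂,ξ₃) = sqrt( ( s_{32}(x³)·ξ₂² − s_{22}(x²)·ξ₃² ) / s^{11}(x²,x³) ). Let (x²,x³,ξ₂,ξ₃) be a point with (ξ₂,ξ₃) ≠ (0,0). If ξ₂·ξ₃ ≠ 0, or if ξ₃ = 0 and s_{33}'(x³) ≠ 0, or if ξ₂ = 0 and s_{22}'(x²) ≠ 0, then the derivative of p at this point is a surjective linear map from ℝ⁴ onto ℝ². -/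
theorem surj_aux {E : Type*} [NormedAddCommGroup E] [NormedSpace ℝ E] (P Q : E → ℝ) (x : E)
    (hP : DifferentiableAt ℝ P x) (hQ : DifferentiableAt ℝ Q x) (hP0 : 0 < P x) (hQ0 : 0 < Q x)
    (v w : E) (a b c d : ℝ) (ha : fderiv ℝ P x v = a) (hb : fderiv ℝ Q x v = b)
    (hc : fderiv ℝ P x w = c) (hd : fderiv ℝ Q x w = d) (hdet : a * d - b * c ≠ 0) :
    Function.Surjective (⇑(fderiv ℝ (fun q => ((Real.sqrt (P q), Real.sqrt (Q q)) : ℝ × ℝ)) x)) := by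
  have h := (hP.hasFDerivAt.sqrt hP0.ne').prodMk (hQ.hasFDerivAt.sqrt hQ0.ne')
  rw [h.fderiv]
  rintro ⟨y, z⟩
  have h1 : Real.sqrt (P x) ≠ 0 := (Real.sqrt_pos.2 hP0).ne'
  have h2 : Real.sqrt (Q x) ≠ 0 := (Real.sqrt_pos.2 hQ0).ne'
  generalize Real.sqrt (P x) = r at *
  generalize Real.sqrt (Q x) = t at *
  refine ⟨((2 * r * y * d - 2 * t * z * c) / (a * d - b * c)) • v
    + ((2 * t * z * a - 2 * r * y * b) / (a * d - b * c)) • w, ?_⟩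
  simp only [ContinuousLinearMap.prod_apply, smul_apply, map_add, map_smul, Prod.smul_mk, Prod.mk_add_mk,
    ha, hb, hc, hd, smul_eq_mul]
  generalize hD : a * d - b * c = D at *
  ext
  · simp only []
    field_simp
    rw [← hD]; ring
  · simp only []
    field_simp
    rw [← hD]; ring

theorem fderiv_curve {E : Type*} [NormedAddCommGroup E] [NormedSpace ℝ E] (P : E → ℝ)
    (γ : ℝ → E) (t : ℝ) (v : E) (c : ℝ) (hP : DifferentiableAt ℝ P (γ t))
    (hγ : HasDerivAt γ v t) (hc : HasDerivAt (fun s => P (γ s)) c t) :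
    fderiv ℝ P (γ t) v = c :=
  (hP.hasFDerivAt.comp_hasDerivAt t hγ).unique hc

/-- **Critical-point analysis of the momentum map** (Appendix C, proof of Lemma 4.6).
At every point where `ξ₂ξ₃ ≠ 0`, or `ξ₃ = 0` and `s₃₃'(x³) ≠ 0`, or `ξ₂ = 0` and
`s₂₂'(x²) ≠ 0`, the derivative of `p = (p₁, p₂)` is surjective onto `ℝ²`. -/
theorem stmt17 (s22 s33 : ℝ → ℝ) (hs22 : ContDiff ℝ 1 s22) (hs33 : ContDiff ℝ 1 s33)
    (hb22 : ∀ x, -1 < s22 x ∧ s22 x < 0) (hb33 : ∀ x, -1 < s33 x ∧ s33 x < 0)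
    (hm : ∀ x2 x3 : ℝ, 0 < s22 x2 * s33 x3 - (1 + s22 x2) * (1 + s33 x3))
    (x2 x3 ξ2 ξ3 : ℝ) (hξ : (ξ2, ξ3) ≠ (0, 0))
    (hcond : ξ2 * ξ3 ≠ 0 ∨ (ξ3 = 0 ∧ deriv s33 x3 ≠ 0) ∨ (ξ2 = 0 ∧ deriv s22 x2 ≠ 0)) :
    Function.Surjective
      (⇑(fderiv ℝ (fun q : ℝ × ℝ × ℝ × ℝ =>
        ((Real.sqrt ((-(s33 q.2.1) * q.2.2.1 ^ 2 + (1 + s22 q.1) * q.2.2.2 ^ 2)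
              / (s22 q.1 * s33 q.2.1 - (1 + s22 q.1) * (1 + s33 q.2.1))),
          Real.sqrt (((1 + s33 q.2.1) * q.2.2.1 ^ 2 - s22 q.1 * q.2.2.2 ^ 2)
              / (s22 q.1 * s33 q.2.1 - (1 + s22 q.1) * (1 + s33 q.2.1)))) : ℝ × ℝ))
        (x2, x3, ξ2, ξ3))) := by
  have hD := hm x2 x3
  obtain ⟨ha1, ha0⟩ := hb22 x2
  obtain ⟨hb1, hb0⟩ := hb33 x3
  have d22 : Differentiable ℝ s22 := hs22.differentiable (by norm_num)
  have d33 : Differentiable ℝ s33 := hs33.differentiable (by norm_num)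
  have e22 := (d22 x2).hasDerivAt
  have e33 := (d33 x3).hasDerivAt
  have hpos : 0 < ξ2 ^ 2 ∨ 0 < ξ3 ^ 2 := by
    by_contra h
    push Not at h
    apply hξ
    have h2 : ξ2 = 0 := by nlinarith [h.1]
    have h3 : ξ3 = 0 := by nlinarith [h.2]
    rw [h2, h3]
  have hN1 : 0 < -(s33 x3) * ξ2 ^ 2 + (1 + s22 x2) * ξ3 ^ 2 := by
    rcases hpos with h | h
    · have := mul_pos (neg_pos.2 hb0) h
      have := mul_nonneg (by linarith : 0 ≤ 1 + s22 x2) (sq_nonneg ξ3)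
      linarith
    · have := mul_nonneg (neg_pos.2 hb0).le (sq_nonneg ξ2)
      have := mul_pos (by linarith : 0 < 1 + s22 x2) h
      linarith
  have hN2 : 0 < (1 + s33 x3) * ξ2 ^ 2 - s22 x2 * ξ3 ^ 2 := by
    rcases hpos with h | h
    · have := mul_nonneg (neg_pos.2 ha0).le (sq_nonneg ξ3)
      have := mul_pos (by linarith : 0 < 1 + s33 x3) h
      linarith
    · have := mul_pos (neg_pos.2 ha0) h
      have := mul_nonneg (by linarith : 0 ≤ 1 + s33 x3) (sq_nonneg ξ2)
      linarith
  have hP : DifferentiableAt ℝ (fun q : ℝ × ℝ × ℝ × ℝ =>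
      (-(s33 q.2.1) * q.2.2.1 ^ 2 + (1 + s22 q.1) * q.2.2.2 ^ 2)
              / (s22 q.1 * s33 q.2.1 - (1 + s22 q.1) * (1 + s33 q.2.1))) (x2, x3, ξ2, ξ3) := by
    have hne : (fun q : ℝ × ℝ × ℝ × ℝ => s22 q.1 * s33 q.2.1 - (1 + s22 q.1) * (1 + s33 q.2.1))
        (x2, x3, ξ2, ξ3) ≠ 0 := hD.ne'
    simp only [div_eq_mul_inv]
    refine DifferentiableAt.fun_mul (by fun_prop) (DifferentiableAt.fun_inv (by fun_prop) hne)
  have hQ : DifferentiableAt ℝ (fun q : ℝ × ℝ × ℝ × ℝ =>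
      ((1 + s33 q.2.1) * q.2.2.1 ^ 2 - s22 q.1 * q.2.2.2 ^ 2)
              / (s22 q.1 * s33 q.2.1 - (1 + s22 q.1) * (1 + s33 q.2.1))) (x2, x3, ξ2, ξ3) := by
    have hne : (fun q : ℝ × ℝ × ℝ × ℝ => s22 q.1 * s33 q.2.1 - (1 + s22 q.1) * (1 + s33 q.2.1))
        (x2, x3, ξ2, ξ3) ≠ 0 := hD.ne'
    simp only [div_eq_mul_inv]
    refine DifferentiableAt.fun_mul (by fun_prop) (DifferentiableAt.fun_inv (by fun_prop) hne)
  have γ1 : HasDerivAt (fun t : ℝ => (t, x3, ξ2, ξ3)) ((1, 0, 0, 0) : ℝ × ℝ × ℝ × ℝ) x2 :=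
    (hasDerivAt_id x2).prodMk (hasDerivAt_const x2 (x3, ξ2, ξ3))
  have γ2 : HasDerivAt (fun t : ℝ => (x2, t, ξ2, ξ3)) ((0, 1, 0, 0) : ℝ × ℝ × ℝ × ℝ) x3 :=
    (hasDerivAt_const x3 x2).prodMk ((hasDerivAt_id x3).prodMk (hasDerivAt_const x3 (ξ2, ξ3)))
  have γ3 : HasDerivAt (fun t : ℝ => (x2, x3, t, ξ3)) ((0, 0, 1, 0) : ℝ × ℝ × ℝ × ℝ) ξ2 :=
    (hasDerivAt_const ξ2 x2).prodMk ((hasDerivAt_const ξ2 x3).prodMk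
      ((hasDerivAt_id ξ2).prodMk (hasDerivAt_const ξ2 ξ3)))
  have γ4 : HasDerivAt (fun t : ℝ => (x2, x3, ξ2, t)) ((0, 0, 0, 1) : ℝ × ℝ × ℝ × ℝ) ξ3 :=
    (hasDerivAt_const ξ3 x2).prodMk ((hasDerivAt_const ξ3 x3).prodMk
      ((hasDerivAt_const ξ3 ξ2).prodMk (hasDerivAt_id ξ3)))
  have q2 : HasDerivAt (fun t : ℝ => t ^ 2) (2 * ξ2) ξ2 := by simpa using hasDerivAt_pow 2 ξ2
  have q3 : HasDerivAt (fun t : ℝ => t ^ 2) (2 * ξ3) ξ3 := by simpa using hasDerivAt_pow 2 ξ3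
  -- derivatives of the quadratic forms along the coordinate lines
  have P3 := fderiv_curve _ _ ξ2 _ _ hP γ3 (((q2.const_mul
    (-(s33 x3))).add_const ((1 + s22 x2) * ξ3 ^ 2)).div_const
    (s22 x2 * s33 x3 - (1 + s22 x2) * (1 + s33 x3)))
  have Q3 := fderiv_curve _ _ ξ2 _ _ hQ γ3 (((q2.const_mul
    (1 + s33 x3)).sub_const (s22 x2 * ξ3 ^ 2)).div_const
    (s22 x2 * s33 x3 - (1 + s22 x2) * (1 + s33 x3)))
  have P4 := fderiv_curve _ _ ξ3 _ _ hP γ4 (((q3.const_mul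
    (1 + s22 x2)).const_add (-(s33 x3) * ξ2 ^ 2)).div_const
    (s22 x2 * s33 x3 - (1 + s22 x2) * (1 + s33 x3)))
  have Q4 := fderiv_curve _ _ ξ3 _ _ hQ γ4 (((q3.const_mul
    (s22 x2)).const_sub ((1 + s33 x3) * ξ2 ^ 2)).div_const
    (s22 x2 * s33 x3 - (1 + s22 x2) * (1 + s33 x3)))
  have D1 := (e22.mul_const (s33 x3)).fun_sub ((e22.const_add 1).mul_const (1 + s33 x3))
  have D2 := (e33.const_mul (s22 x2)).fun_sub ((e33.const_add 1).const_mul (1 + s22 x2))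
  have P1 := fderiv_curve _ _ x2 _ _ hP γ1 ((((e22.const_add 1).mul_const (ξ3 ^ 2)).const_add
    (-(s33 x3) * ξ2 ^ 2)).fun_div D1 hD.ne')
  have Q1 := fderiv_curve _ _ x2 _ _ hQ γ1 (((e22.mul_const (ξ3 ^ 2)).const_sub
    ((1 + s33 x3) * ξ2 ^ 2)).fun_div D1 hD.ne')
  have P2 := fderiv_curve _ _ x3 _ _ hP γ2 (((e33.fun_neg.mul_const (ξ2 ^ 2)).add_const
    ((1 + s22 x2) * ξ3 ^ 2)).fun_div D2 hD.ne')
  have Q2 := fderiv_curve _ _ x3 _ _ hQ γ2 ((((e33.const_add 1).mul_const (ξ2 ^ 2)).sub_const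
    (s22 x2 * ξ3 ^ 2)).fun_div D2 hD.ne')
  have hP0 := div_pos hN1 hD
  have hQ0 := div_pos hN2 hD
  have hne := hD.ne'
  rcases hcond with h | ⟨h3, h⟩ | ⟨h2, h⟩
  · refine surj_aux _ _ _ hP hQ hP0 hQ0 _ _ _ _ _ _ P3 Q3 P4 Q4 ?_
    have : 4 * (ξ2 * ξ3) / (s22 x2 * s33 x3 - (1 + s22 x2) * (1 + s33 x3)) ≠ 0 :=
      div_ne_zero (mul_ne_zero (by norm_num) h) hne
    convert this using 1
    simp
    field_simp
    ring
  · have hξ2 : ξ2 ≠ 0 := by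
      rintro rfl
      exact hξ (by rw [h3])
    refine surj_aux _ _ _ hP hQ hP0 hQ0 _ _ _ _ _ _ P3 Q3 P2 Q2 ?_
    have : 2 * ξ2 ^ 3 * deriv s33 x3 / (s22 x2 * s33 x3 - (1 + s22 x2) * (1 + s33 x3)) ^ 2 ≠ 0 :=
      div_ne_zero (mul_ne_zero (mul_ne_zero (by norm_num) (pow_ne_zero _ hξ2)) h)
        (pow_ne_zero _ hne)
    convert this using 1
    rw [h3]
    dsimp only
    clear * - hne
    generalize hE : s22 x2 * s33 x3 - (1 + s22 x2) * (1 + s33 x3) = D at hne ⊢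
    field_simp
    rw [← hE]
    ring
  · have hξ3 : ξ3 ≠ 0 := by
      rintro rfl
      exact hξ (by rw [h2])
    refine surj_aux _ _ _ hP hQ hP0 hQ0 _ _ _ _ _ _ P4 Q4 P1 Q1 ?_
    have : -(2 * ξ3 ^ 3 * deriv s22 x2) / (s22 x2 * s33 x3 - (1 + s22 x2) * (1 + s33 x3)) ^ 2 ≠ 0 :=
      div_ne_zero (neg_ne_zero.2 (mul_ne_zero (mul_ne_zero (by norm_num) (pow_ne_zero _ hξ3)) h))
        (pow_ne_zero _ hne)
    convert this using 1
    subst h2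
    simp
    field_simp
    ring
end
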